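/- There exists an absolute constant C > 0 such that the following holds. Let p be an odd prime, let g, h : 𝔽_p* → 𝔽_p* be arbitrary functions, define f(x,y) = g(x)(h(x)+y) on 𝔽_p* × 𝔽_p*, and set m = μ(g·h), where (g·h)(x) := g(x)h(x). Then for all nonempty finite subsets A, B, C ⊆ 𝔽_p* with |A| ≤ |B| and |A|, |B|, |C| ≤ p^{3/5}, the fourth-order multiplicative energy satisfies E₄^×(B,C) = Σ_x r_{B/C}(x)⁴ ≤ C · m⁴ · min{ |f(A,B)|³|C|²/|A| , |f(A,B)|²|C|³/|A| } · log(2|A|). -/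

import Mathlib

open Finset Pointwise

/-- `mu g` is `max_{t ∈ 𝔽_p*} |{x ∈ 𝔽_p* : g x = t}|`. -/
def mu {p : ℕ} [NeZero p] (g : ZMod p → ZMod p) : ℕ :=
  Finset.sup (Finset.univ.filter fun t : ZMod p => t ≠ 0)
    (fun t => (Finset.univ.filter fun x : ZMod p => x ≠ 0 ∧ g x = t).card)

/-- `rDiv B C x` is the number of ways to write `x = b * c⁻¹` with `b ∈ B`, `c ∈ C`. -/
def rDiv {p : ℕ} (B C : Finset (ZMod p)) (x : ZMod p) : ℕ :=
  ((B ×ˢ C).filter fun bc => bc.1 * bc.2⁻¹ = x).card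

/-- Fourth-order multiplicative energy `E₄^×(B,C) = Σ_{x ∈ 𝔽_p*} r_{B/C}(x)^4`. -/
def E4mul {p : ℕ} [NeZero p] (B C : Finset (ZMod p)) : ℕ :=
  ∑ x ∈ Finset.univ.filter (fun x : ZMod p => x ≠ 0), (rDiv B C x) ^ 4

/-!
A quotient `x` with at least `τ` representations `b / c` gives, for each `α ∈ A`, an affine map
`c ↦ g α * (h α + x * c)` sending at least `τ` points of `C` into `V = f(A, B)`; the inverse map
sends as many points of `V` into `C`. By Cauchy–Schwarz the maps have many coincidences
`l w = l' w'`, and exchanging the first coordinates of `(w, l)` and `(w', l')` turns these into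
incidences between two sets of points of `K³`, equivalently into intersections between two families
of lines in `K³`, each family parallel to a coordinate plane.

Such intersections are bounded by the polynomial method. A surface of degree about `√n` through a
random sample of the lines contains nearly all the lines with many intersections. A component with
many lines of both families satisfies a flex equation in each of the two directions, so it is the
graph of a bilinear polynomial, and the lines on it have collinear parameters, which bounds their
number. Summing the resulting bound for the number of `x` over dyadic `τ` gives the fourth moment
and the logarithm.
-/

section MvPolynomialLemmas

open MvPolynomial

theorem derivation_aeval {ι R A M : Type*} [Fintype ι] [CommSemiring R] [CommSemiring A]
    [Algebra R A] [AddCommMonoid M] [Module R M] [Module A M] [IsScalarTower R A M]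
    (D : Derivation R A M) (a : ι → A) (f : MvPolynomial ι R) :
    D (aeval a f) = ∑ i, aeval a (pderiv i f) • D (a i) := by
  classical
  induction f using MvPolynomial.induction_on with
  | C r => simp
  | add f g hf hg => simp only [map_add, hf, hg, add_smul, sum_add_distrib]
  | mul_X f j hf =>
    simp only [map_mul, aeval_X, Derivation.leibniz, hf, smul_eq_mul, pderiv_X, map_add, add_smul,
      sum_add_distrib, mul_smul, ← smul_sum, Pi.single_apply, apply_ite (aeval a), map_one,
      map_zero, ite_smul, one_smul, zero_smul, sum_ite_eq, mem_univ, if_true]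

variable {σ R : Type*}

theorem totalDegree_pderiv_add_one_le [CommSemiring R] {i : σ} {f : MvPolynomial σ R}
    (h : pderiv i f ≠ 0) : (pderiv i f).totalDegree + 1 ≤ f.totalDegree := by
  obtain ⟨m, hm, hdeg⟩ := exists_mem_eq_sup _ (support_nonempty.2 h)
    (fun s : σ →₀ ℕ => s.sum fun _ e => e)
  have hmem : m + Finsupp.single i 1 ∈ f.support := by
    rw [mem_support_iff, coeff_pderiv] at hm
    exact mem_support_iff.2 (left_ne_zero_of_mul hm)
  have hle := le_totalDegree hmem
  classical
  rw [Finsupp.sum_add_index' (by simp) (by simp)] at hle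
  rw [totalDegree, hdeg]
  simpa using hle

theorem totalDegree_pderiv_le [CommSemiring R] (i : σ) (f : MvPolynomial σ R) :
    (pderiv i f).totalDegree ≤ f.totalDegree := by
  by_cases h : pderiv i f = 0
  · simp [h]
  · exact (Nat.le_succ _).trans (totalDegree_pderiv_add_one_le h)

theorem natCast_ne_zero_of_lt_charP [AddMonoidWithOne R] (p : ℕ) [CharP R p] {n : ℕ} (h0 : n ≠ 0)
    (hn : n < p) : (n : R) ≠ 0 := fun h =>
  h0 (Nat.eq_zero_of_dvd_of_lt ((CharP.cast_eq_zero_iff R p n).1 h) hn)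

theorem pderiv_ne_zero_of_degreeOf_lt_charP [CommSemiring R] [NoZeroDivisors R] (p : ℕ) [CharP R p]
    {i : σ} {f : MvPolynomial σ R} (h0 : f.degreeOf i ≠ 0) (hp : f.degreeOf i < p) :
    pderiv i f ≠ 0 := by
  have hf : f ≠ 0 := by rintro rfl; simp at h0
  obtain ⟨m, hm, hdeg⟩ := exists_mem_eq_sup _ (support_nonempty.2 hf) (fun s : σ →₀ ℕ => s i)
  rw [← degreeOf_eq_sup] at hdeg
  have hsplit : m - Finsupp.single i 1 + Finsupp.single i 1 = m :=
    tsub_add_cancel_of_le (Finsupp.single_le_iff.2 (by omega))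
  have hcast : (m - Finsupp.single i 1 : σ →₀ ℕ) i + 1 = m i := by
    simp only [Finsupp.tsub_apply, Finsupp.single_eq_same]
    omega
  intro h
  have hcoeff := coeff_pderiv f (m - Finsupp.single i 1) (i := i)
  rw [h, hsplit, coeff_zero, ← Nat.cast_add_one, hcast] at hcoeff
  rcases mul_eq_zero.1 hcoeff.symm with h1 | h1
  · exact mem_support_iff.1 hm h1
  · exact natCast_ne_zero_of_lt_charP p (by omega) (by omega) h1

theorem pderiv_mem_pow_idealOfVars [CommSemiring R] {n : ℕ} {f : MvPolynomial σ R}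
    (hf : f ∈ idealOfVars σ R ^ n) (i : σ) : pderiv i f ∈ idealOfVars σ R ^ (n - 1) := by
  rw [mem_pow_idealOfVars_iff'] at hf ⊢
  intro m hm
  rw [coeff_pderiv, hf _ (by simp; omega), zero_mul]

section CommRing

variable [CommRing R]

theorem sub_constantCoeff_mem_idealOfVars (f : MvPolynomial σ R) :
    f - C (constantCoeff f) ∈ idealOfVars σ R := by
  rw [← pow_one (idealOfVars σ R), mem_pow_idealOfVars_iff']
  intro m hm
  obtain rfl : m = 0 := (Finsupp.degree_eq_zero_iff m).1 (Nat.lt_one_iff.1 hm)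
  simp [constantCoeff_eq]

/- If `f` vanishes to order `n` at the origin, then every other term of the equation vanishes there
to order `n - 1`, whereas the degree `n - 2` part of `u * ∂ᵢ²f` is the constant term of `u` times
`∂ᵢ²` of the degree `n` part of `f`. -/
theorem coeff_eq_zero_of_pderiv_pderiv_eq [IsDomain R] (p : ℕ) [CharP R p] {i : σ} {n : ℕ}
    {f u a b : MvPolynomial σ R} (hu : constantCoeff u ≠ 0)
    (hode : u * pderiv i (pderiv i f) = a * f + b * pderiv i f) (hf : f ∈ idealOfVars σ R ^ n)
    {m : σ →₀ ℕ} (hm : m.degree = n) (hmi : 2 ≤ m i) (hmp : m i < p) : coeff m f = 0 := by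
  obtain ⟨k, rfl⟩ : ∃ k, m = k + Finsupp.single i 1 + Finsupp.single i 1 := by
    have hle : Finsupp.single i 2 ≤ m := Finsupp.single_le_iff.2 hmi
    refine ⟨m - Finsupp.single i 2, ?_⟩
    rw [add_assoc, ← Finsupp.single_add, tsub_add_cancel_of_le hle]
  have hk : k.degree + 2 = n := by
    rw [← hm]
    simp
  have hf₁ : pderiv i f ∈ idealOfVars σ R ^ (n - 1) := pderiv_mem_pow_idealOfVars hf i
  have hf₂ : pderiv i (pderiv i f) ∈ idealOfVars σ R ^ k.degree := by
    simpa [← hk] using pderiv_mem_pow_idealOfVars hf₁ i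
  have hlead : C (constantCoeff u) * pderiv i (pderiv i f) ∈ idealOfVars σ R ^ (n - 1) := by
    have hsub : (u - C (constantCoeff u)) * pderiv i (pderiv i f) ∈ idealOfVars σ R ^ (n - 1) := by
      rw [show n - 1 = k.degree + 1 by omega, pow_succ']
      exact Ideal.mul_mem_mul (sub_constantCoeff_mem_idealOfVars u) hf₂
    rw [show C (constantCoeff u) * pderiv i (pderiv i f)
      = a * f + b * pderiv i f - (u - C (constantCoeff u)) * pderiv i (pderiv i f) by
        linear_combination hode]
    exact sub_mem (add_mem (Ideal.mul_mem_left _ _ (Ideal.pow_le_pow_right (by omega) hf))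
      (Ideal.mul_mem_left _ _ hf₁)) hsub
  have hcoeff := (mem_pow_idealOfVars_iff' (n - 1) _).1 hlead k (by omega)
  simp only [coeff_C_mul, coeff_pderiv, ← Nat.cast_add_one] at hcoeff
  simp only [Finsupp.add_apply, Finsupp.single_eq_same] at hmp hcoeff
  have hk₁ := natCast_ne_zero_of_lt_charP (R := R) p (Nat.succ_ne_zero (k i)) (by omega)
  have hk₂ := natCast_ne_zero_of_lt_charP (R := R) p (Nat.succ_ne_zero (k i + 1)) hmp
  exact ((mul_eq_zero.1 ((mul_eq_zero.1 ((mul_eq_zero.1 hcoeff).resolve_left hu)).resolve_right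
    hk₁)).resolve_right hk₂)

theorem eq_zero_of_pderiv_pderiv_eq [IsDomain R] (p : ℕ) [CharP R p] {f u : MvPolynomial σ R}
    (hu : constantCoeff u ≠ 0)
    (hode : ∀ i, ∃ a b, u * pderiv i (pderiv i f) = a * f + b * pderiv i f)
    (hdeg : ∀ i, f.degreeOf i < p) (hinit : ∀ m : σ →₀ ℕ, (∀ i, m i ≤ 1) → coeff m f = 0) :
    f = 0 := by
  suffices hord : ∀ n, f ∈ idealOfVars σ R ^ n by
    ext m
    exact (mem_pow_idealOfVars_iff' _ f).1 (hord (m.degree + 1)) m (Nat.lt_succ_self _)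
  intro n
  induction n with
  | zero => simp
  | succ n ih =>
    rw [mem_pow_idealOfVars_iff']
    intro m hm
    rcases Nat.lt_succ_iff_lt_or_eq.1 hm with hlt | hmn
    · exact (mem_pow_idealOfVars_iff' n f).1 ih m hlt
    by_contra hne
    by_cases hm1 : ∀ i, m i ≤ 1
    · exact hne (hinit m hm1)
    push Not at hm1
    obtain ⟨i, hi⟩ := hm1
    obtain ⟨a, b, hab⟩ := hode i
    exact hne (coeff_eq_zero_of_pderiv_pderiv_eq p hu hab ih hmn hi
      ((monomial_le_degreeOf i (mem_support_iff.2 hne)).trans_lt (hdeg i)))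

theorem totalDegree_resultant_le {f g : Polynomial (MvPolynomial σ R)} {a b : ℕ} (m n : ℕ)
    (hf : ∀ i, (f.coeff i).totalDegree ≤ a) (hg : ∀ i, (g.coeff i).totalDegree ≤ b) :
    (f.resultant g m n).totalDegree ≤ m * b + n * a := by
  rw [Polynomial.resultant, Matrix.det_apply]
  refine totalDegree_finsetSum_le fun τ _ => (totalDegree_smul_le _ _).trans <|
    (totalDegree_finsetProd _ _).trans ?_
  rw [Fin.sum_univ_add]
  have hg_col (j : Fin m) :
      ((f.sylvester g m n) (τ (j.castAdd n)) (j.castAdd n)).totalDegree ≤ b := by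
    simp only [Polynomial.sylvester, Matrix.of_apply, Fin.addCases_left]
    split_ifs <;> simp [hg]
  have hf_col (j : Fin n) :
      ((f.sylvester g m n) (τ (j.natAdd m)) (j.natAdd m)).totalDegree ≤ a := by
    simp only [Polynomial.sylvester, Matrix.of_apply, Fin.addCases_right]
    split_ifs <;> simp [hf]
  refine add_le_add ((sum_le_sum fun j _ => hg_col j).trans ?_)
    ((sum_le_sum fun j _ => hf_col j).trans ?_) <;> simp

theorem card_le_totalDegree_of_eval_eq_zero [IsDomain R] [Infinite R] [Finite σ]
    {f : MvPolynomial σ R} (hf : f ≠ 0) (s : σ) (T : Finset R)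
    (h : ∀ w : σ → R, w s ∈ T → eval w f = 0) : #T ≤ f.totalDegree := by
  classical
  by_contra! hT
  obtain ⟨U, hU⟩ := Infinite.exists_subset_card_eq R (f.totalDegree + 1)
  refine hf (eq_zero_of_eval_zero_at_prod_finset f (fun i => if i = s then T else U)
    (fun i => (degreeOf_le_totalDegree f i).trans_lt ?_) fun w hw => h w (by simpa using hw s))
  split_ifs
  · exact hT
  · omega

end CommRing

theorem totalDegree_coeff_finSuccEquiv_le [CommSemiring R] {n : ℕ}
    (f : MvPolynomial (Fin (n + 1)) R) (i : ℕ) :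
    ((finSuccEquiv R n f).coeff i).totalDegree ≤ f.totalDegree := by
  by_cases h : (finSuccEquiv R n f).coeff i = 0
  · simp [h]
  · exact le_of_add_le_left (totalDegree_coeff_finSuccEquiv_add_le f i h)

theorem degreeOf_aeval_le_totalDegree {τ : Type*} [CommSemiring R] {a : σ → MvPolynomial τ R}
    {i : τ} (ha : ∀ k, (a k).degreeOf i ≤ 1) (f : MvPolynomial σ R) :
    (aeval a f).degreeOf i ≤ f.totalDegree := by
  rw [aeval_def, eval₂_eq]
  refine (degreeOf_sum_le _ _ _).trans (Finset.sup_le fun m hm => ?_)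
  refine (degreeOf_C_mul_le _ _ _).trans <| (degreeOf_prod_le _ _ _).trans <|
    (sum_le_sum fun k _ => ?_).trans (le_totalDegree hm)
  exact (degreeOf_pow_le _ _ _).trans (mul_le_of_le_one_right' (ha k))

end MvPolynomialLemmas

section Elimination

theorem resultant_ne_zero_of_irreducible {R : Type*} [CommRing R] [IsDomain R]
    [UniqueFactorizationMonoid R] {f g : Polynomial R} (hf : Irreducible f)
    (hdeg : f.natDegree ≠ 0) (hfg : ¬ f ∣ g) : f.resultant g ≠ 0 := by
  let K := FractionRing R
  have hinj : Function.Injective (algebraMap R K) := IsFractionRing.injective _ _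
  let : NormalizedGCDMonoid R := Classical.choice inferInstance
  have hprim := hf.isPrimitive hdeg
  have hirr : Irreducible (f.map (algebraMap R K)) :=
    (hprim.irreducible_iff_irreducible_map_fraction_map (K := K)).1 hf
  have hcop : IsCoprime (f.map (algebraMap R K)) (g.map (algebraMap R K)) :=
    hirr.coprime_iff_not_dvd.2 fun h => hfg ((hprim.dvd_iff_fraction_map_dvd_fraction_map K).2 h)
  intro h0
  have hmap := Polynomial.resultant_map_map f g f.natDegree g.natDegree (algebraMap R K)
  rw [h0, map_zero, ← Polynomial.natDegree_map_eq_of_injective hinj f,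
    ← Polynomial.natDegree_map_eq_of_injective hinj g, Polynomial.resultant_eq_zero_iff] at hmap
  exact hmap.2 hcop

theorem map_resultant_eq_zero {R S : Type*} [CommRing R] [CommRing S] (φ : R →+* S)
    {f g : Polynomial R} (hdeg : f.natDegree ≠ 0) {x : S} (hf : f.eval₂ φ x = 0)
    (hg : g.eval₂ φ x = 0) : φ (f.resultant g) = 0 := by
  obtain ⟨a, b, -, -, hab⟩ :=
    Polynomial.exists_mul_add_mul_eq_C_resultant f g le_rfl le_rfl (Or.inl hdeg)
  simpa [hf, hg, Polynomial.eval₂_add, Polynomial.eval₂_mul] using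
    (congrArg (Polynomial.eval₂ φ x) hab).symm

/- The resultant with respect to the variable `0` is such a polynomial. -/
theorem exists_eliminant {K : Type*} [Field K] {n : ℕ} {f g : MvPolynomial (Fin (n + 1)) K}
    (hf : Irreducible f) (hdeg : f.degreeOf 0 ≠ 0) (hfg : ¬ f ∣ g) :
    ∃ r : MvPolynomial (Fin n) K, r ≠ 0 ∧ r.totalDegree ≤ 2 * f.totalDegree * g.totalDegree ∧
      ∀ (z : K) (w : Fin n → K), MvPolynomial.eval (Fin.cons z w : Fin (n + 1) → K) f = 0 →
        MvPolynomial.eval (Fin.cons z w : Fin (n + 1) → K) g = 0 → MvPolynomial.eval w r = 0 := by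
  let e := MvPolynomial.finSuccEquiv K n
  have hdeg_e (q : MvPolynomial (Fin (n + 1)) K) : (e q).natDegree = q.degreeOf 0 :=
    MvPolynomial.natDegree_finSuccEquiv q
  have hdeg' : (e f).natDegree ≠ 0 := hdeg_e f ▸ hdeg
  refine ⟨(e f).resultant (e g), ?_, ?_, fun z w hfz hgz => ?_⟩
  · exact resultant_ne_zero_of_irreducible ((MulEquiv.irreducible_iff e).2 hf) hdeg'
      fun h => hfg ((map_dvd_iff e).1 h)
  · refine (totalDegree_resultant_le _ _ (totalDegree_coeff_finSuccEquiv_le f)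
      (totalDegree_coeff_finSuccEquiv_le g)).trans ?_
    rw [hdeg_e, hdeg_e]
    have hdf := MvPolynomial.degreeOf_le_totalDegree f 0
    have hdg := MvPolynomial.degreeOf_le_totalDegree g 0
    nlinarith
  · rw [MvPolynomial.eval_eq_eval_mv_eval', ← Polynomial.eval₂_eq_eval_map] at hfz hgz
    exact map_resultant_eq_zero _ hdeg' hfz hgz

end Elimination

section FlexPolynomial

open MvPolynomial

variable {σ R : Type*} [CommRing R]

/-- The second derivative of `f` along the tangent field `f_o ∂_v - f_v ∂_o`, with `f_o` and `f_v`
treated as constants. It vanishes wherever a line of the plane directions `o, v` has contact of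
order at least three with the surface `f = 0`. -/
noncomputable def flexPoly (o v : σ) (f : MvPolynomial σ R) : MvPolynomial σ R :=
  pderiv v (pderiv v f) * pderiv o f ^ 2
    - (pderiv o (pderiv v f) + pderiv v (pderiv o f)) * pderiv v f * pderiv o f
    + pderiv o (pderiv o f) * pderiv v f ^ 2

theorem totalDegree_flexPoly_le (o v : σ) (f : MvPolynomial σ R) :
    (flexPoly o v f).totalDegree ≤ 3 * f.totalDegree := by
  have h₁ (i : σ) := totalDegree_pderiv_le i f
  have h₂ (i j : σ) := (totalDegree_pderiv_le i (pderiv j f)).trans (h₁ j)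
  have hmul {a b c : MvPolynomial σ R} (ha : a.totalDegree ≤ f.totalDegree)
      (hb : b.totalDegree ≤ f.totalDegree) (hc : c.totalDegree ≤ f.totalDegree) :
      (a * b * c).totalDegree ≤ 3 * f.totalDegree := by
    have := totalDegree_mul (a * b) c
    have := totalDegree_mul a b
    omega
  refine (totalDegree_add _ _).trans (max_le ((totalDegree_sub _ _).trans (max_le ?_ ?_)) ?_)
  · rw [sq, ← mul_assoc]
    exact hmul (h₂ v v) (h₁ o) (h₁ o)
  · exact hmul ((totalDegree_add _ _).trans (max_le (h₂ o v) (h₂ v o))) (h₁ v) (h₁ o)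
  · rw [sq, ← mul_assoc]
    exact hmul (h₂ o o) (h₁ v) (h₁ v)

/- Differentiating `f ∘ a` twice gives `f_vv + 2 κ f_ov + κ² f_oo` with `κ = D (a o)`; modulo
`D (f ∘ a)` one may substitute `-f_v` for `κ f_o`. -/
theorem exists_aeval_flexPoly_eq {A : Type*} [Finite σ] [CommRing A] [Algebra R A]
    (D : Derivation R A A) {a : σ → A} {o v : σ} (hov : v ≠ o) (ho : D (D (a o)) = 0)
    (hv : D (a v) = 1) (hother : ∀ i, i ≠ o → i ≠ v → D (a i) = 0) (f : MvPolynomial σ R) :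
    ∃ b, aeval a (flexPoly o v f) =
      aeval a (pderiv o f) ^ 2 * D (D (aeval a f)) - b * D (aeval a f) := by
  classical
  have := Fintype.ofFinite σ
  have hchain (g : MvPolynomial σ R) :
      D (aeval a g) = aeval a (pderiv o g) * D (a o) + aeval a (pderiv v g) := by
    rw [derivation_aeval, Fintype.sum_eq_add o v hov.symm
      fun i hi => by rw [hother i hi.1 hi.2, smul_zero], hv]
    simp
  refine ⟨aeval a (pderiv o f) * (aeval a (pderiv o (pderiv v f)) + aeval a (pderiv v (pderiv o f)))
    + 2 * D (a o) * aeval a (pderiv o f) * aeval a (pderiv o (pderiv o f))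
    - (aeval a (pderiv o f) * D (a o) + aeval a (pderiv v f)) * aeval a (pderiv o (pderiv o f)), ?_⟩
  rw [hchain f, map_add, Derivation.leibniz, ho, hchain, hchain]
  simp only [flexPoly, map_add, map_sub, map_mul, map_pow, smul_eq_mul]
  ring

end FlexPolynomial

section AxisLine

variable {K : Type*} [Field K]

/-- Points of the line in `K³` with parameters `i = (t, a, b)` in the family `s`. Writing the
coordinates as `(z, w 0, w 1)`, it is the line `w s = t`, `z = a + b * w (1 - s)`, parametrized by
`x = w (1 - s)`. -/
def axisLine (s : Fin 2) (i : K × K × K) (x : K) : Fin 3 → K :=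
  Fin.cons (i.2.1 + i.2.2 * x) fun k => if k = s then i.1 else x

/-- The line with parameters `i` in the family `s` lies on the surface `f = 0`. -/
def VanishesOnLine (s : Fin 2) (f : MvPolynomial (Fin 3) K) (i : K × K × K) : Prop :=
  ∀ x, MvPolynomial.eval (axisLine s i x) f = 0

/-- The parametrization `axisLine`, with polynomial entries. -/
noncomputable def axisLinePoly (s : Fin 2) (i : K × K × K) : Fin 3 → Polynomial K :=
  Fin.cons (Polynomial.C i.2.1 + Polynomial.C i.2.2 * Polynomial.X)
    fun k => if k = s then Polynomial.C i.1 else Polynomial.X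

theorem axisLine_eq_cons {s : Fin 2} {i : K × K × K} {w : Fin 2 → K} (hw : w s = i.1) :
    axisLine s i (w (1 - s)) = Fin.cons (i.2.1 + i.2.2 * w (1 - s)) w := by
  unfold axisLine
  congr 1
  ext k
  fin_cases s <;> fin_cases k <;> simp_all

theorem eval_aeval_axisLinePoly (s : Fin 2) (i : K × K × K) (f : MvPolynomial (Fin 3) K) (x : K) :
    (MvPolynomial.aeval (axisLinePoly s i) f).eval x = MvPolynomial.eval (axisLine s i x) f := by
  rw [← Polynomial.coe_aeval_eq_eval, MvPolynomial.comp_aeval_apply, MvPolynomial.aeval_eq_eval]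
  congr 2
  ext k
  cases k using Fin.cases with
  | zero => simp [axisLinePoly, axisLine]
  | succ k => by_cases hk : k = s <;> simp [axisLinePoly, axisLine, hk]

theorem natDegree_axisLinePoly_le (s : Fin 2) (i : K × K × K) (k : Fin 3) :
    (axisLinePoly s i k).natDegree ≤ 1 := by
  cases k using Fin.cases with
  | zero =>
    simp only [axisLinePoly, Fin.cons_zero]
    compute_degree
  | succ k =>
    simp only [axisLinePoly, Fin.cons_succ]
    split_ifs <;> simp

variable [Infinite K]

theorem vanishesOnLine_iff {s : Fin 2} {f : MvPolynomial (Fin 3) K} {i : K × K × K} :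
    VanishesOnLine s f i ↔ MvPolynomial.aeval (axisLinePoly s i) f = 0 := by
  simp only [VanishesOnLine, ← eval_aeval_axisLinePoly]
  exact ⟨fun h => Polynomial.funext fun x => by rw [h x, Polynomial.eval_zero],
    fun h x => by rw [h, Polynomial.eval_zero]⟩

theorem vanishesOnLine_of_totalDegree_lt_card {s : Fin 2} {f : MvPolynomial (Fin 3) K}
    {i : K × K × K} {T : Finset K} (hT : f.totalDegree < #T)
    (h : ∀ x ∈ T, MvPolynomial.eval (axisLine s i x) f = 0) : VanishesOnLine s f i := by
  have hdeg := MvPolynomial.aeval_natDegree_le f le_rfl _ (natDegree_axisLinePoly_le s i)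
  refine vanishesOnLine_iff.2 (Polynomial.eq_zero_of_natDegree_lt_card_of_eval_eq_zero' _ T
    (fun x hx => ?_) (by omega))
  rw [eval_aeval_axisLinePoly, h x hx]

theorem VanishesOnLine.flexPoly {s : Fin 2} {f : MvPolynomial (Fin 3) K} {i : K × K × K}
    (h : VanishesOnLine s f i) : VanishesOnLine s (flexPoly 0 (1 - s).succ f) i := by
  rw [vanishesOnLine_iff] at h ⊢
  obtain ⟨b, hb⟩ := exists_aeval_flexPoly_eq (Polynomial.derivative' (R := K))
    (a := axisLinePoly s i) (o := 0) (v := (1 - s).succ) (Fin.succ_ne_zero _)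
    (by simp [axisLinePoly, Polynomial.derivative'])
    (by simp [axisLinePoly, Polynomial.derivative', show 1 - s ≠ s by omega])
    (fun k h0 hk => by
      obtain ⟨k, rfl⟩ := Fin.exists_succ_eq.2 h0
      have : k = s := by
        rw [ne_eq, Fin.succ_inj] at hk
        omega
      simp [axisLinePoly, Polynomial.derivative', this]) f
  rw [hb, h]
  simp

theorem card_le_totalDegree_of_vanishesOnLine {s : Fin 2} {I : Finset (K × K × K)}
    (hI : Set.InjOn Prod.fst (I : Set (K × K × K))) {r : MvPolynomial (Fin 2) K} (hr : r ≠ 0)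
    (h : ∀ i ∈ I, ∀ w : Fin 2 → K, w s = i.1 → MvPolynomial.eval w r = 0) :
    #I ≤ r.totalDegree := by
  classical
  rw [← card_image_of_injOn hI]
  refine card_le_totalDegree_of_eval_eq_zero hr s _ fun w hw => ?_
  obtain ⟨i, hi, hiw⟩ := mem_image.1 hw
  exact h i hi w hiw.symm

/- Bézout: the projections of the common lines are parallel lines in the plane, on which the
eliminant of `f` and `g` vanishes. -/
theorem card_le_of_vanishesOnLine_of_not_dvd {s : Fin 2} {f g : MvPolynomial (Fin 3) K}
    (hf : Irreducible f) (hdeg : f.degreeOf 0 ≠ 0) (hfg : ¬ f ∣ g) {I : Finset (K × K × K)}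
    (hI : Set.InjOn Prod.fst (I : Set (K × K × K))) (hIf : ∀ i ∈ I, VanishesOnLine s f i)
    (hIg : ∀ i ∈ I, VanishesOnLine s g i) : #I ≤ 2 * f.totalDegree * g.totalDegree := by
  obtain ⟨r, hr, hr_deg, hr_eval⟩ := exists_eliminant hf hdeg hfg
  refine (card_le_totalDegree_of_vanishesOnLine (s := s) hI hr fun i hi w hw => ?_).trans hr_deg
  apply hr_eval (i.2.1 + i.2.2 * w (1 - s)) w <;> rw [← axisLine_eq_cons hw]
  exacts [hIf i hi _, hIg i hi _]

theorem card_le_totalDegree_of_degreeOf_zero_eq_zero {s : Fin 2} {f : MvPolynomial (Fin 3) K}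
    (hf : f ≠ 0) (hdeg : f.degreeOf 0 = 0) {I : Finset (K × K × K)}
    (hI : Set.InjOn Prod.fst (I : Set (K × K × K))) (hIf : ∀ i ∈ I, VanishesOnLine s f i) :
    #I ≤ f.totalDegree := by
  let e := MvPolynomial.finSuccEquiv K 2
  obtain ⟨r, hr⟩ : ∃ r, e f = Polynomial.C r := ⟨_, Polynomial.eq_C_of_natDegree_eq_zero
    (by rw [MvPolynomial.natDegree_finSuccEquiv, hdeg])⟩
  have hr0 : r ≠ 0 := by
    rintro rfl
    exact hf ((map_eq_zero_iff e e.injective).1 (by rw [hr, map_zero]))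
  have hr_deg : r.totalDegree ≤ f.totalDegree := by
    simpa [e, hr] using totalDegree_coeff_finSuccEquiv_le f 0
  refine (card_le_totalDegree_of_vanishesOnLine (s := s) hI hr0 fun i hi w hw => ?_).trans hr_deg
  have h := hIf i hi (w (1 - s))
  rw [axisLine_eq_cons hw, MvPolynomial.eval_eq_eval_mv_eval', hr] at h
  simpa using h

end AxisLine

section RuledSurface

open MvPolynomial

section Graph

variable {K : Type*} [Field K] {n : ℕ}

theorem dvd_X_zero_sub_rename_succ [Infinite K] {f : MvPolynomial (Fin (n + 1)) K}
    (hf : Irreducible f) (hdeg : f.degreeOf 0 ≠ 0) {g : MvPolynomial (Fin n) K}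
    (h : ∀ w : Fin n → K, eval (Fin.cons (eval w g) w : Fin (n + 1) → K) f = 0) :
    f ∣ X 0 - rename Fin.succ g := by
  by_contra hfg
  obtain ⟨r, hr, -, hr_eval⟩ := exists_eliminant hf hdeg hfg
  refine hr (MvPolynomial.funext fun w => ?_)
  rw [map_zero]
  refine hr_eval _ w (h w) ?_
  simp [eval_rename, Function.comp_def]

/-- The parametrization `w ↦ (g w, w₀ + w)` of a graph, based over the point `w₀`. -/
noncomputable def graphParam (g : MvPolynomial (Fin n) K) (w₀ : Fin n → K) :
    Fin (n + 1) → MvPolynomial (Fin n) K :=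
  Fin.cons g fun k => C (w₀ k) + X k

theorem eval_aeval_graphParam (g : MvPolynomial (Fin n) K) (w₀ w : Fin n → K)
    (f : MvPolynomial (Fin (n + 1)) K) :
    eval w (aeval (graphParam g w₀) f) =
      eval (Fin.cons (eval w g) (w₀ + w) : Fin (n + 1) → K) f := by
  rw [← aeval_eq_eval, comp_aeval_apply, aeval_eq_eval]
  congr 2
  ext k
  cases k using Fin.cases <;> simp [graphParam, aeval_eq_eval]

theorem pderiv_aeval_graphParam (g : MvPolynomial (Fin n) K) (w₀ : Fin n → K) (i : Fin n)
    (f : MvPolynomial (Fin (n + 1)) K) :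
    pderiv i (aeval (graphParam g w₀) f) =
      aeval (graphParam g w₀) (pderiv 0 f) * pderiv i g +
        aeval (graphParam g w₀) (pderiv i.succ f) := by
  rw [derivation_aeval, Fin.sum_univ_succ]
  simp [graphParam, pderiv_X, Pi.single_apply]

theorem degreeOf_graphParam_le {g : MvPolynomial (Fin n) K} {i : Fin n} (hg : g.degreeOf i ≤ 1)
    (w₀ : Fin n → K) (k : Fin (n + 1)) : (graphParam g w₀ k).degreeOf i ≤ 1 := by
  cases k using Fin.cases with
  | zero => exact hg
  | succ k =>
    refine (degreeOf_add_le _ _ _).trans (max_le (by simp) ?_)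
    rw [degreeOf_X]
    split_ifs <;> simp

end Graph

variable {K : Type*} [Field K]

/-- The bilinear polynomial `α + β X₀ + γ X₁ + δ X₀ X₁`. -/
noncomputable def bilinearPoly (α β γ δ : K) : MvPolynomial (Fin 2) K :=
  C α + C β * X 0 + C γ * X 1 + C δ * (X 0 * X 1)

theorem eval_bilinearPoly (α β γ δ : K) (w : Fin 2 → K) :
    eval w (bilinearPoly α β γ δ) = α + β * w 0 + γ * w 1 + δ * (w 0 * w 1) := by
  simp [bilinearPoly]

theorem pderiv_zero_bilinearPoly (α β γ δ : K) :
    pderiv 0 (bilinearPoly α β γ δ) = C β + C δ * X 1 := by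
  simp [bilinearPoly, pderiv_X]

theorem pderiv_one_bilinearPoly (α β γ δ : K) :
    pderiv 1 (bilinearPoly α β γ δ) = C γ + C δ * X 0 := by
  simp [bilinearPoly, pderiv_X]

theorem pderiv_pderiv_bilinearPoly (α β γ δ : K) (i : Fin 2) :
    pderiv i (pderiv i (bilinearPoly α β γ δ)) = 0 := by
  fin_cases i
  · simp [pderiv_zero_bilinearPoly, pderiv_X]
  · simp [pderiv_one_bilinearPoly, pderiv_X]

theorem degreeOf_bilinearPoly_le (α β γ δ : K) (i : Fin 2) :
    (bilinearPoly α β γ δ).degreeOf i ≤ 1 := by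
  have hX (j : Fin 2) : (X j : MvPolynomial (Fin 2) K).degreeOf i ≤ 1 := by
    rw [degreeOf_X]
    split_ifs <;> simp
  have hXX : (X 0 * X 1 : MvPolynomial (Fin 2) K).degreeOf i ≤ 1 := by
    refine (degreeOf_mul_le _ _ _).trans ?_
    rw [degreeOf_X, degreeOf_X]
    fin_cases i <;> simp
  have hadd {a b : MvPolynomial (Fin 2) K} (ha : a.degreeOf i ≤ 1) (hb : b.degreeOf i ≤ 1) :
      (a + b).degreeOf i ≤ 1 := (degreeOf_add_le _ _ _).trans (max_le ha hb)
  exact hadd (hadd (hadd (by simp) ((degreeOf_C_mul_le _ _ _).trans (hX 0)))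
    ((degreeOf_C_mul_le _ _ _).trans (hX 1))) ((degreeOf_C_mul_le _ _ _).trans hXX)

theorem coeff_eq_zero_of_constantCoeff_pderiv {R : Type*} [CommSemiring R]
    {f : MvPolynomial (Fin 2) R} (h : constantCoeff f = 0)
    (h0 : constantCoeff (pderiv 0 f) = 0) (h1 : constantCoeff (pderiv 1 f) = 0)
    (h01 : constantCoeff (pderiv 1 (pderiv 0 f)) = 0) {m : Fin 2 →₀ ℕ} (hm : ∀ i, m i ≤ 1) :
    coeff m f = 0 := by
  obtain ⟨e₀, e₁, rfl⟩ : ∃ e₀ e₁, m = Finsupp.single 0 e₀ + Finsupp.single 1 e₁ := by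
    refine ⟨m 0, m 1, ?_⟩
    ext i
    fin_cases i <;> simp
  have he₀ : e₀ ≤ 1 := by simpa using hm 0
  have he₁ : e₁ ≤ 1 := by simpa using hm 1
  simp only [constantCoeff_eq, coeff_pderiv] at h h0 h1 h01
  interval_cases e₀ <;> interval_cases e₁
  · simpa using h
  · simpa using h1
  · simpa using h0
  · simpa [add_comm] using h01

/- The coefficients are found one after the other: `f_z` is nonzero at the base point, and it
multiplies the new coefficient in the corresponding derivative of the composite. -/
theorem exists_bilinear_contact {f : MvPolynomial (Fin 3) K} {z : K} {w₀ : Fin 2 → K}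
    (hf : eval (Fin.cons z w₀ : Fin 3 → K) f = 0)
    (hz : eval (Fin.cons z w₀ : Fin 3 → K) (pderiv 0 f) ≠ 0) :
    ∃ β γ δ : K, ∀ m : Fin 2 →₀ ℕ, (∀ i, m i ≤ 1) →
      coeff m (aeval (graphParam (bilinearPoly z β γ δ) w₀) f) = 0 := by
  set ev := eval (Fin.cons z w₀ : Fin 3 → K)
  set c := ev (pderiv 0 f)
  obtain ⟨β, hβ⟩ : ∃ β, c * β + ev (pderiv 1 f) = 0 := ⟨-ev (pderiv 1 f) / c, by field_simp; ring⟩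
  obtain ⟨γ, hγ⟩ : ∃ γ, c * γ + ev (pderiv 2 f) = 0 := ⟨-ev (pderiv 2 f) / c, by field_simp; ring⟩
  obtain ⟨δ, hδ⟩ : ∃ δ, c * δ + (ev (pderiv 0 (pderiv 0 f)) * γ + ev (pderiv 2 (pderiv 0 f))) * β
      + (ev (pderiv 0 (pderiv 1 f)) * γ + ev (pderiv 2 (pderiv 1 f))) = 0 :=
    ⟨-((ev (pderiv 0 (pderiv 0 f)) * γ + ev (pderiv 2 (pderiv 0 f))) * β
      + (ev (pderiv 0 (pderiv 1 f)) * γ + ev (pderiv 2 (pderiv 1 f)))) / c, by field_simp; ring⟩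
  refine ⟨β, γ, δ, fun m hm => ?_⟩
  have hev (q : MvPolynomial (Fin 3) K) :
      constantCoeff (aeval (graphParam (bilinearPoly z β γ δ) w₀) q) = ev q := by
    rw [← eval_zero, eval_aeval_graphParam, eval_bilinearPoly]
    simp [ev]
  refine coeff_eq_zero_of_constantCoeff_pderiv ?_ ?_ ?_ ?_ hm
  · rw [hev, hf]
  · rw [pderiv_aeval_graphParam, pderiv_zero_bilinearPoly]
    simp only [map_add, map_mul, hev]
    simpa using hβ
  · rw [pderiv_aeval_graphParam, pderiv_one_bilinearPoly]
    simp only [map_add, map_mul, hev]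
    simpa using hγ
  · simp only [pderiv_aeval_graphParam, pderiv_zero_bilinearPoly, pderiv_one_bilinearPoly, map_add,
      Derivation.leibniz, smul_eq_mul, map_mul, hev]
    simp only [derivation_C, map_zero, constantCoeff_C, pderiv_X, Pi.single_eq_same, map_one,
      mul_one, constantCoeff_X, mul_zero, add_zero, zero_add, Fin.succ_one_eq_two,
      Fin.succ_zero_eq_one]
    linear_combination hδ

/- Along the graph of a bilinear function the flex condition reads `f_z² ∂ᵢ²G = b ∂ᵢG + a G`, and
such a system has no nonzero solution with vanishing initial data. -/
theorem exists_bilinear_of_dvd_flexPoly {p : ℕ} [CharP K p] {f : MvPolynomial (Fin 3) K}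
    (hp : f.totalDegree < p) (hflex : ∀ v : Fin 2, f ∣ flexPoly 0 v.succ f) {z : K} {w₀ : Fin 2 → K}
    (hf : eval (Fin.cons z w₀ : Fin 3 → K) f = 0)
    (hz : eval (Fin.cons z w₀ : Fin 3 → K) (pderiv 0 f) ≠ 0) :
    ∃ α β γ δ : K, ∀ w,
      eval (Fin.cons (eval w (bilinearPoly α β γ δ)) w : Fin 3 → K) f = 0 := by
  obtain ⟨β, γ, δ, hinit⟩ := exists_bilinear_contact hf hz
  set a := graphParam (bilinearPoly z β γ δ) w₀ with ha
  have hode (i : Fin 2) : ∃ q b, aeval a (pderiv 0 f) ^ 2 * pderiv i (pderiv i (aeval a f)) =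
      q * aeval a f + b * pderiv i (aeval a f) := by
    obtain ⟨q, hq⟩ := hflex i
    obtain ⟨b, hb⟩ := exists_aeval_flexPoly_eq (pderiv (R := K) i) (a := a) (Fin.succ_ne_zero i)
      (pderiv_pderiv_bilinearPoly z β γ δ i) (by simp [ha, graphParam])
      (fun k h0 hk => by
        obtain ⟨k, rfl⟩ := Fin.exists_succ_eq.2 h0
        rw [ne_eq, Fin.succ_inj] at hk
        simp [ha, graphParam, pderiv_X_of_ne hk]) f
    rw [hq, map_mul] at hb
    exact ⟨aeval a q, b, by linear_combination -hb⟩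
  have hzero : aeval a f = 0 := by
    refine eq_zero_of_pderiv_pderiv_eq p (u := aeval a (pderiv 0 f) ^ 2) ?_ hode (fun i => ?_) hinit
    · rw [← eval_zero, map_pow, ha, eval_aeval_graphParam, eval_bilinearPoly]
      simpa using hz
    · exact (degreeOf_aeval_le_totalDegree (degreeOf_graphParam_le
        (degreeOf_bilinearPoly_le z β γ δ i) w₀) f).trans_lt hp
  refine ⟨z - β * w₀ 0 - γ * w₀ 1 + δ * w₀ 0 * w₀ 1, β - δ * w₀ 1, γ - δ * w₀ 0, δ, fun w => ?_⟩
  have h := eval_aeval_graphParam (bilinearPoly z β γ δ) w₀ (w - w₀) f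
  rw [← ha, hzero, map_zero] at h
  rw [h, eval_bilinearPoly, eval_bilinearPoly, add_sub_cancel]
  congr 2
  simp only [Pi.sub_apply]
  congr 1
  ring

variable [Infinite K]

theorem eq_of_vanishesOnLine_of_bilinear {f : MvPolynomial (Fin 3) K} (hf : Irreducible f)
    (hdeg : f.degreeOf 0 ≠ 0) {α β γ δ : K}
    (h : ∀ w, eval (Fin.cons (eval w (bilinearPoly α β γ δ)) w : Fin 3 → K) f = 0)
    {i : K × K × K} (hi : VanishesOnLine 1 f i) :
    i.2.1 = α + γ * i.1 ∧ i.2.2 = β + δ * i.1 := by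
  have hline (x : K) : i.2.1 + i.2.2 * x = α + β * x + γ * i.1 + δ * (x * i.1) := by
    obtain ⟨q, hq⟩ := dvd_X_zero_sub_rename_succ hf hdeg h
    have hx := congrArg (eval (axisLine 1 i x)) hq
    rw [map_mul, hi x, zero_mul, map_sub, eval_rename, eval_bilinearPoly] at hx
    have h2 : axisLine 1 i x 2 = i.1 := rfl
    simp only [eval_X, Function.comp_apply, Fin.succ_zero_eq_one, Fin.succ_one_eq_two, h2,
      sub_eq_zero] at hx
    simpa [axisLine] using hx
  have h0 := hline 0
  have h1 := hline 1
  exact ⟨by linear_combination h0, by linear_combination h1 - h0⟩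

/- A surface containing many lines of both families satisfies both flex equations, hence is a
bilinear graph. -/
theorem card_le_or_exists_bilinear {p : ℕ} [CharP K p] {f : MvPolynomial (Fin 3) K}
    (hf : Irreducible f) (hp : f.totalDegree < p) {I J : Finset (K × K × K)}
    (hI : Set.InjOn Prod.fst (I : Set (K × K × K))) (hJ : Set.InjOn Prod.fst (J : Set (K × K × K)))
    (hIf : ∀ i ∈ I, VanishesOnLine 1 f i) (hJf : ∀ j ∈ J, VanishesOnLine 0 f j) :
    #I ≤ 6 * f.totalDegree ^ 2 ∨ #J ≤ 6 * f.totalDegree ^ 2 ∨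
      ∃ α β γ δ : K, ∀ i, VanishesOnLine 1 f i → i.2.1 = α + γ * i.1 ∧ i.2.2 = β + δ * i.1 := by
  by_cases hdeg : f.degreeOf 0 = 0
  · have := card_le_totalDegree_of_degreeOf_zero_eq_zero hf.ne_zero hdeg hJ hJf
    exact .inr (.inl (by nlinarith))
  by_contra! ⟨hI_card, hJ_card, hbil⟩
  have hflex (v : Fin 2) : f ∣ flexPoly 0 v.succ f := by
    have hle := totalDegree_flexPoly_le 0 v.succ f
    by_contra hn
    fin_cases v
    · have := card_le_of_vanishesOnLine_of_not_dvd hf hdeg hn hI hIf fun i hi =>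
        (hIf i hi).flexPoly
      nlinarith
    · have := card_le_of_vanishesOnLine_of_not_dvd hf hdeg hn hJ hJf fun j hj =>
        (hJf j hj).flexPoly
      nlinarith
  have hz := pderiv_ne_zero_of_degreeOf_lt_charP p hdeg ((degreeOf_le_totalDegree f 0).trans_lt hp)
  have hz_lt := totalDegree_pderiv_add_one_le hz
  have hz_dvd : ¬ f ∣ pderiv 0 f := fun h => by
    have := totalDegree_le_of_dvd_of_isDomain h hz
    omega
  obtain ⟨i, hi, hiz⟩ : ∃ i ∈ I, ¬ VanishesOnLine 1 (pderiv 0 f) i := by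
    by_contra! h
    have := card_le_of_vanishesOnLine_of_not_dvd hf hdeg hz_dvd hI hIf h
    nlinarith
  obtain ⟨x, hx⟩ := not_forall.1 hiz
  have hline := axisLine_eq_cons (s := 1) (i := i) (w := ![x, i.1]) rfl
  obtain ⟨α, β, γ, δ, hgraph⟩ := exists_bilinear_of_dvd_flexPoly hp hflex
    (hline ▸ hIf i hi x) (hline ▸ hx)
  obtain ⟨j, hj, hj_ne⟩ := hbil α β γ δ
  obtain ⟨h₁, h₂⟩ := eq_of_vanishesOnLine_of_bilinear hf hdeg hgraph hj
  exact hj_ne h₁ h₂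

end RuledSurface

section Counting

variable {α β ι : Type*}

theorem card_interedges_eq_sum_left (r : α → β → Prop) [∀ a, DecidablePred (r a)] (s : Finset α)
    (t : Finset β) : #(Rel.interedges r s t) = ∑ a ∈ s, #{b ∈ t | r a b} := by
  simp only [Rel.interedges, card_filter, sum_product]

theorem card_interedges_eq_sum_right (r : α → β → Prop) [∀ a, DecidablePred (r a)] (s : Finset α)
    (t : Finset β) : #(Rel.interedges r s t) = ∑ b ∈ t, #{a ∈ s | r a b} := by
  simp only [Rel.interedges, card_filter, sum_product_right]

theorem card_biUnion_filter_le_mul_sq_sum [DecidableEq α] (F : Finset ι) (S : ι → Finset α)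
    (w : ι → ℕ) (c : ℕ) :
    #({f ∈ F | #(S f) ≤ c * w f ^ 2}.biUnion S) ≤ c * (∑ f ∈ F, w f) ^ 2 := by
  calc #({f ∈ F | #(S f) ≤ c * w f ^ 2}.biUnion S)
      ≤ ∑ f ∈ F with #(S f) ≤ c * w f ^ 2, #(S f) := card_biUnion_le
    _ ≤ ∑ f ∈ F with #(S f) ≤ c * w f ^ 2, c * w f ^ 2 :=
      sum_le_sum fun f hf => (mem_filter.1 hf).2
    _ ≤ ∑ f ∈ F, c * w f ^ 2 := sum_le_sum_of_subset (filter_subset _ _)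
    _ ≤ c * (∑ f ∈ F, w f) ^ 2 := by
      rw [← mul_sum]
      gcongr
      exact sum_sq_le_sq_sum_of_nonneg fun _ _ => Nat.zero_le _

end Counting

/-- At most `k` elements of `s` lie on a line. -/
def AtMostCollinear (K : Type*) {V : Type*} [DivisionRing K] [AddCommGroup V] [Module K V] (k : ℕ)
    (s : Finset V) : Prop :=
  ∀ t ⊆ s, Collinear K (t : Set V) → #t ≤ k

theorem AtMostCollinear.subset {K V : Type*} [DivisionRing K] [AddCommGroup V] [Module K V] {k : ℕ}
    {s t : Finset V} (hs : AtMostCollinear K k s) (hts : t ⊆ s) : AtMostCollinear K k t :=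
  fun u hu => hs u (hu.trans hts)

section LineIncidence

variable {K : Type*} [Field K]

/-- The line with parameters `i` in one family meets the line with parameters `j` in the other
family, where `axisLine` fixes the meaning of the parameters. -/
def Incident (i j : K × K × K) : Prop :=
  i.2.1 + i.2.2 * j.1 = j.2.1 + j.2.2 * i.1

instance [DecidableEq K] (i : K × K × K) : DecidablePred (Incident i) :=
  fun j => inferInstanceAs (Decidable (i.2.1 + i.2.2 * j.1 = j.2.1 + j.2.2 * i.1))

instance : Std.Symm (Incident (K := K)) := ⟨fun _ _ => Eq.symm⟩

theorem Incident.symm {i j : K × K × K} (h : Incident i j) : Incident j i := Eq.symm h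

theorem Incident.axisLine_eq {i j : K × K × K} (h : Incident i j) (s : Fin 2) :
    axisLine s i j.1 = axisLine (1 - s) j i.1 := by
  unfold axisLine
  rw [show i.2.1 + i.2.2 * j.1 = j.2.1 + j.2.2 * i.1 from h]
  congr 1
  ext k
  fin_cases s <;> fin_cases k <;> simp

theorem collinear_of_forall_eq_affine {s : Set (K × K × K)} {α β γ δ : K}
    (h : ∀ i ∈ s, i.2.1 = α + γ * i.1 ∧ i.2.2 = β + δ * i.1) : Collinear K s := by
  rw [collinear_iff_exists_forall_eq_smul_vadd]
  refine ⟨(0, α, β), (1, γ, δ), fun i hi => ⟨i.1, ?_⟩⟩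
  obtain ⟨ha, hb⟩ := h i hi
  ext <;> simp [ha, hb, mul_comm, add_comm]

theorem totalDegree_prod_of_ne_zero {σ R ι : Type*} [CommRing R] [IsDomain R] {s : Finset ι}
    {f : ι → MvPolynomial σ R} (h : ∀ i ∈ s, f i ≠ 0) :
    (∏ i ∈ s, f i).totalDegree = ∑ i ∈ s, (f i).totalDegree := by
  classical
  induction s using Finset.induction_on with
  | empty => simp
  | insert a s ha ih =>
    rw [forall_mem_insert] at h
    rw [prod_insert ha, sum_insert ha,
      MvPolynomial.totalDegree_mul_of_isDomain h.1 (prod_ne_zero_iff.2 h.2), ih h.2]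

theorem exists_finset_irreducible_of_ne_zero [Infinite K] {P : MvPolynomial (Fin 3) K}
    (hP : P ≠ 0) :
    ∃ F : Finset (MvPolynomial (Fin 3) K), (∀ f ∈ F, Irreducible f) ∧
      ∑ f ∈ F, f.totalDegree ≤ P.totalDegree ∧
      ∀ s i, VanishesOnLine s P i → ∃ f ∈ F, VanishesOnLine s f i := by
  classical
  set M := UniqueFactorizationMonoid.factors P
  have hirr (f) (hf : f ∈ M) : Irreducible f := UniqueFactorizationMonoid.irreducible_of_factor f hf
  obtain ⟨u, hu⟩ : Associated M.prod P := UniqueFactorizationMonoid.factors_prod hP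
  refine ⟨M.toFinset, fun f hf => hirr f (Multiset.mem_toFinset.1 hf), ?_, fun s i hi => ?_⟩
  · have hdvd : ∏ f ∈ M.toFinset, f ∣ P := by
      rw [← hu]
      exact (Multiset.toFinset_prod_dvd_prod M).mul_right _
    rw [← totalDegree_prod_of_ne_zero fun f hf => (hirr f (Multiset.mem_toFinset.1 hf)).ne_zero]
    exact MvPolynomial.totalDegree_le_of_dvd_of_isDomain hdvd hP
  · rw [vanishesOnLine_iff, ← hu, map_mul, mul_eq_zero_iff_right (u.isUnit.map _).ne_zero,
      map_multiset_prod, Multiset.prod_eq_zero_iff, Multiset.mem_map] at hi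
    obtain ⟨f, hf, hf_zero⟩ := hi
    exact ⟨f, Multiset.mem_toFinset.2 hf, vanishesOnLine_iff.2 hf_zero⟩

variable [Infinite K]

theorem card_le_totalDegree_of_forall_incident {s : Fin 2} {f : MvPolynomial (Fin 3) K}
    {i : K × K × K} (hi : ¬ VanishesOnLine s f i) {J : Finset (K × K × K)}
    (hJ : Set.InjOn Prod.fst (J : Set (K × K × K)))
    (hJf : ∀ j ∈ J, VanishesOnLine (1 - s) f j ∧ Incident i j) : #J ≤ f.totalDegree := by
  classical
  by_contra! hlt
  rw [← card_image_of_injOn hJ] at hlt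
  refine hi (vanishesOnLine_of_totalDegree_lt_card hlt fun x hx => ?_)
  obtain ⟨j, hj, rfl⟩ := mem_image.1 hx
  rw [(hJf j hj).2.axisLine_eq]
  exact (hJf j hj).1 i.1

/- For each `i`, and each surface `f` of the list not containing `i`, at most `f.totalDegree` lines
assigned to `f` meet `i`. -/
theorem card_interedges_not_vanishesOnLine_le {I J : Finset (K × K × K)}
    (hJ_inj : Set.InjOn Prod.fst (J : Set (K × K × K))) {F : Finset (MvPolynomial (Fin 3) K)}
    {ψ : K × K × K → MvPolynomial (Fin 3) K} (hψ : ∀ j ∈ J, ψ j ∈ F ∧ VanishesOnLine 0 (ψ j) j)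
    [∀ i, DecidablePred fun j => Incident i j ∧ ¬ VanishesOnLine 1 (ψ j) i] :
    #(Rel.interedges (fun i j => Incident i j ∧ ¬ VanishesOnLine 1 (ψ j) i) I J) ≤
      #I * ∑ f ∈ F, f.totalDegree := by
  classical
  rw [card_interedges_eq_sum_left, ← smul_eq_mul, ← sum_const]
  refine sum_le_sum fun i _ => ?_
  rw [card_eq_sum_card_fiberwise (f := ψ) (t := F) fun j hj => (hψ j (mem_filter.1 hj).1).1]
  refine sum_le_sum fun f _ => ?_
  have hmem {j} (hj : j ∈ ({j ∈ {j ∈ J | Incident i j ∧ ¬ VanishesOnLine 1 (ψ j) i} | ψ j = f} :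
      Finset _)) : j ∈ J ∧ Incident i j ∧ ¬ VanishesOnLine 1 f i ∧ ψ j = f := by
    grind
  by_cases hfi : VanishesOnLine 1 f i
  · rw [card_eq_zero.2 (eq_empty_of_forall_notMem fun j hj => (hmem hj).2.2.1 hfi)]
    exact Nat.zero_le _
  · exact card_le_totalDegree_of_forall_incident hfi (hJ_inj.mono fun j hj => (hmem hj).1)
      fun j hj => ⟨(hmem hj).2.2.2 ▸ (hψ j (hmem hj).1).2, (hmem hj).2.1⟩

open Classical in
theorem card_filter_vanishesOnLine_le {p : ℕ} [CharP K p] {f : MvPolynomial (Fin 3) K}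
    (hf : Irreducible f) (hp : f.totalDegree < p) {k : ℕ} {I J : Finset (K × K × K)}
    (hI_inj : Set.InjOn Prod.fst (I : Set (K × K × K)))
    (hJ_inj : Set.InjOn Prod.fst (J : Set (K × K × K))) (hI : AtMostCollinear K k I)
    (hJ : ∀ j ∈ J, VanishesOnLine 0 f j) :
    #{i ∈ I | VanishesOnLine 1 f i} ≤ 6 * f.totalDegree ^ 2 ∨ #J ≤ 6 * f.totalDegree ^ 2 ∨
      #{i ∈ I | VanishesOnLine 1 f i} ≤ k := by
  refine (card_le_or_exists_bilinear hf hp (hI_inj.mono (filter_subset _ _)) hJ_inj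
    (fun i hi => (mem_filter.1 hi).2) hJ).imp_right (Or.imp_right ?_)
  rintro ⟨α, β, γ, δ, hbil⟩
  exact hI _ (filter_subset _ _) (collinear_of_forall_eq_affine
    fun i hi => hbil i (mem_filter.1 hi).2)

variable [DecidableEq K]

/- Each line `j` is assigned an irreducible component `ψ j` of `P` containing it. A component
contains few lines of `I`, or few lines are assigned to it, or it is a bilinear graph, in which case
its lines in `I` are collinear points. -/
theorem exists_card_interedges_le_of_vanishesOnLine {p : ℕ} [CharP K p]
    {P : MvPolynomial (Fin 3) K} (hP : P ≠ 0) (hp : P.totalDegree < p) {k : ℕ}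
    {I J : Finset (K × K × K)} (hI_inj : Set.InjOn Prod.fst (I : Set (K × K × K)))
    (hJ_inj : Set.InjOn Prod.fst (J : Set (K × K × K))) (hI : AtMostCollinear K k I)
    (hJ : ∀ j ∈ J, VanishesOnLine 0 P j) :
    ∃ I' ⊆ I, ∃ J' ⊆ J, ∃ J₀ ⊆ J,
      #I' ≤ 6 * P.totalDegree ^ 2 ∧ #J' ≤ 6 * P.totalDegree ^ 2 ∧
      #(Rel.interedges Incident I J) ≤ #I * P.totalDegree + k * #J₀
        + #(Rel.interedges Incident I' (J \ J₀)) + #(Rel.interedges Incident I J') := by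
  classical
  obtain ⟨F, hirr, hF, hfac⟩ := exists_finset_irreducible_of_ne_zero hP
  choose! ψ hψ using fun j hj => hfac 0 j (hJ j hj)
  let If (f : MvPolynomial (Fin 3) K) : Finset (K × K × K) := {i ∈ I | VanishesOnLine 1 f i}
  let Jf (f : MvPolynomial (Fin 3) K) : Finset (K × K × K) := {j ∈ J | ψ j = f}
  let I' := {f ∈ F | #(If f) ≤ 6 * f.totalDegree ^ 2}.biUnion If
  let J' := {f ∈ F | #(Jf f) ≤ 6 * f.totalDegree ^ 2}.biUnion Jf
  let J₀ : Finset (K × K × K) := {j ∈ J | #(If (ψ j)) ≤ k}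
  have hsq : 6 * (∑ f ∈ F, f.totalDegree) ^ 2 ≤ 6 * P.totalDegree ^ 2 := by gcongr
  have htri (f) (hf : f ∈ F) :
      #(If f) ≤ 6 * f.totalDegree ^ 2 ∨ #(Jf f) ≤ 6 * f.totalDegree ^ 2 ∨ #(If f) ≤ k := by
    refine card_filter_vanishesOnLine_le (hirr f hf)
      (((single_le_sum_of_canonicallyOrdered hf).trans hF).trans_lt hp) hI_inj
      (hJ_inj.mono (filter_subset _ _)) hI fun j hj => ?_
    obtain ⟨hjJ, rfl⟩ := mem_filter.1 hj
    exact (hψ j hjJ).2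
  refine ⟨I', biUnion_subset.2 fun f _ => filter_subset _ _, J',
    biUnion_subset.2 fun f _ => filter_subset _ _, J₀, filter_subset _ _,
    (card_biUnion_filter_le_mul_sq_sum F If _ 6).trans hsq,
    (card_biUnion_filter_le_mul_sq_sum F Jf _ 6).trans hsq, ?_⟩
  let E₁ := Rel.interedges (fun i j => Incident i j ∧ ¬ VanishesOnLine 1 (ψ j) i) I J
  let E₂ := Rel.interedges (fun i j => VanishesOnLine 1 (ψ j) i) I J₀
  have hE₁ : #E₁ ≤ #I * P.totalDegree :=
    (card_interedges_not_vanishesOnLine_le hJ_inj hψ).trans (by gcongr)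
  have hE₂ : #E₂ ≤ k * #J₀ := by
    rw [card_interedges_eq_sum_right, mul_comm, ← smul_eq_mul, ← sum_const]
    exact sum_le_sum fun j hj => (mem_filter.1 hj).2
  have hcover : Rel.interedges Incident I J ⊆
      E₁ ∪ E₂ ∪ Rel.interedges Incident I' (J \ J₀) ∪ Rel.interedges Incident I J' := by
    rintro ⟨i, j⟩ hij
    obtain ⟨hi, hj, hinc⟩ := Rel.mk_mem_interedges_iff.1 hij
    simp only [mem_union, E₁, E₂, Rel.mk_mem_interedges_iff, I', J', J₀, mem_biUnion, mem_filter,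
      mem_sdiff, If, Jf]
    have := htri (ψ j) (hψ j hj).1
    grind
  have := (card_le_card hcover).trans (card_union_le _ _)
  have := card_union_le (E₁ ∪ E₂) (Rel.interedges Incident I' (J \ J₀))
  have := card_union_le E₁ E₂
  omega

end LineIncidence

section PolynomialMethod

open MvPolynomial

variable {σ K : Type*} [Field K]

theorem exists_ne_zero_support_subset_eval_eq_zero {W : Finset (σ → K)} {M : Finset (σ →₀ ℕ)}
    (h : #W < #M) : ∃ P : MvPolynomial σ K, P ≠ 0 ∧ P.support ⊆ M ∧ ∀ w ∈ W, eval w P = 0 := by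
  let b := basisRestrictSupport K (M : Set (σ →₀ ℕ))
  have := Module.Finite.of_basis b
  let ev : restrictSupport K (M : Set (σ →₀ ℕ)) →ₗ[K] W → K :=
    LinearMap.pi fun w => (aeval (w : σ → K)).toLinearMap ∘ₗ Submodule.subtype _
  have hker : LinearMap.ker ev ≠ ⊥ := by
    apply LinearMap.ker_ne_bot_of_finrank_lt
    simpa [Module.finrank_eq_card_basis b] using h
  obtain ⟨⟨P, hP⟩, hPev, hP0⟩ := (Submodule.ne_bot_iff _).1 hker
  refine ⟨P, fun h => hP0 (Subtype.ext h), by simpa [mem_restrictSupport_iff] using hP,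
    fun w hw => ?_⟩
  simpa [ev, aeval_eq_eval] using congrFun (LinearMap.mem_ker.1 hPev) ⟨w, hw⟩

theorem exists_ne_zero_totalDegree_le_eval_eq_zero [Fintype σ] {W : Finset (σ → K)} {D : ℕ}
    (h : #W < D ^ Fintype.card σ) :
    ∃ P : MvPolynomial σ K, P ≠ 0 ∧ P.totalDegree ≤ Fintype.card σ * D ∧ ∀ w ∈ W, eval w P = 0 := by
  obtain ⟨P, hP0, hP, hPW⟩ := exists_ne_zero_support_subset_eval_eq_zero (W := W)
    (M := univ.finsupp fun _ => range D) (by simpa [card_finsupp] using h)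
  refine ⟨P, hP0, ?_, hPW⟩
  rw [totalDegree_eq]
  refine Finset.sup_le fun m hm => ?_
  rw [Finsupp.card_toMultiset, Finsupp.sum_fintype _ _ fun _ => rfl, ← smul_eq_mul, ← card_univ,
    ← sum_const]
  exact sum_le_sum fun i _ => (mem_range.1 ((mem_finsupp_iff.1 (hP hm)).2 i (mem_univ i))).le

theorem exists_ne_zero_vanishesOnLine [Infinite K] (s : Fin 2) {S : Finset (K × K × K)} {D : ℕ}
    (h : #S * (3 * D + 1) < D ^ 3) :
    ∃ P : MvPolynomial (Fin 3) K, P ≠ 0 ∧ P.totalDegree ≤ 3 * D ∧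
      ∀ i ∈ S, VanishesOnLine s P i := by
  classical
  obtain ⟨T, hT⟩ := Infinite.exists_subset_card_eq K (3 * D + 1)
  have hcard : #((S ×ˢ T).image fun a => axisLine s a.1 a.2) < D ^ Fintype.card (Fin 3) := by
    refine card_image_le.trans_lt ?_
    rwa [card_product, hT]
  obtain ⟨P, hP0, hP, hPT⟩ := exists_ne_zero_totalDegree_le_eval_eq_zero hcard
  exact ⟨P, hP0, hP, fun i hi => vanishesOnLine_of_totalDegree_lt_card (T := T)
    (by rw [Fintype.card_fin] at hP; omega)
    fun x hx => hPT _ (mem_image_of_mem _ (mk_mem_product hi hx))⟩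

theorem exists_ne_zero_vanishesOnLine_of_card_le [Infinite K] (s : Fin 2) {S : Finset (K × K × K)}
    {u : ℝ} (hu : 1 ≤ u) (hS : #S ≤ 2 * u ^ 2) :
    ∃ P : MvPolynomial (Fin 3) K, P ≠ 0 ∧ P.totalDegree ≤ 12 * u ∧
      ∀ i ∈ S, VanishesOnLine s P i := by
  have hD_lt := Nat.lt_floor_add_one (3 * u)
  have hD_le := Nat.floor_le (show 0 ≤ 3 * u by positivity)
  set D := ⌊3 * u⌋₊ + 1 with hD
  have hDr : (D : ℝ) = ⌊3 * u⌋₊ + 1 := by simp [hD]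
  rw [← hDr] at hD_lt
  have hcard : #S * (3 * D + 1) < D ^ 3 := by
    have : (#S : ℝ) * (3 * D + 1) < (D : ℝ) ^ 3 := calc
      (#S : ℝ) * (3 * D + 1) ≤ 2 * u ^ 2 * (4 * D) := by
        gcongr
        linarith
      _ < (3 * u) ^ 2 * D := by nlinarith
      _ ≤ (D : ℝ) ^ 2 * D := by gcongr
      _ = (D : ℝ) ^ 3 := by ring
    exact_mod_cast this
  obtain ⟨P, hP0, hP, hPS⟩ := exists_ne_zero_vanishesOnLine s hcard
  refine ⟨P, hP0, ?_, hPS⟩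
  have : (P.totalDegree : ℝ) ≤ 3 * D := by exact_mod_cast hP
  linarith

end PolynomialMethod

section Sampling

variable {α β : Type*}

/- Deterministic form of the second moment bound for a random subset of density `q`: adding `a` with
probability `q` increases the expectation of the left-hand side by `q (1 - q) ‖v a‖ ^ 2`. -/
theorem exists_subset_norm_sum_sub_smul_sum_sq_le {E : Type*} [NormedAddCommGroup E]
    [InnerProductSpace ℝ E] (v : α → E) {q : ℝ} (hq₀ : 0 ≤ q) (hq₁ : q ≤ 1) (I : Finset α) :
    ∃ S ⊆ I, ‖∑ i ∈ S, v i - q • ∑ i ∈ I, v i‖ ^ 2 ≤ q * ∑ i ∈ I, ‖v i‖ ^ 2 := by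
  classical
  induction I using Finset.induction_on with
  | empty => exact ⟨∅, by simp⟩
  | insert a I ha ih =>
    obtain ⟨S, hS, hle⟩ := ih
    set d := ∑ i ∈ S, v i - q • ∑ i ∈ I, v i
    have hin : ∑ i ∈ insert a S, v i - q • ∑ i ∈ insert a I, v i = d + (1 - q) • v a := by
      rw [sum_insert ha, sum_insert fun h => ha (hS h)]
      module
    have hout : ∑ i ∈ S, v i - q • ∑ i ∈ insert a I, v i = d - q • v a := by
      rw [sum_insert ha]
      module
    have hmean : q * ‖d + (1 - q) • v a‖ ^ 2 + (1 - q) * ‖d - q • v a‖ ^ 2 =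
        ‖d‖ ^ 2 + q * (1 - q) * ‖v a‖ ^ 2 := by
      rw [norm_add_sq_real, norm_sub_sq_real d, inner_smul_right, inner_smul_right, norm_smul,
        norm_smul, mul_pow, mul_pow, Real.norm_eq_abs, Real.norm_eq_abs, sq_abs, sq_abs]
      ring
    have hva : 0 ≤ q * q * ‖v a‖ ^ 2 := by positivity
    have hsub : S ⊆ insert a I := hS.trans (subset_insert a I)
    by_contra! hlt
    have h_in := hlt (insert a S) (insert_subset_insert a hS)
    have h_out := hlt S hsub
    rw [hin, sum_insert ha] at h_in
    rw [hout, sum_insert ha] at h_out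
    have hconv := convex_Ioi (q * (‖v a‖ ^ 2 + ∑ i ∈ I, ‖v i‖ ^ 2)) (Set.mem_Ioi.2 h_in)
      (Set.mem_Ioi.2 h_out) hq₀ (sub_nonneg.2 hq₁) (add_sub_cancel _ _)
    rw [Set.mem_Ioi, smul_eq_mul, smul_eq_mul, hmean] at hconv
    linarith

theorem exists_subset_sum_sq_card_sub_le (r : α → β → Prop) [∀ a, DecidablePred (r a)]
    (I : Finset α) (J : Finset β) {q : ℝ} (hq₀ : 0 ≤ q) (hq₁ : q ≤ 1) :
    ∃ S ⊆ I, #J * (#S - q * #I) ^ 2 +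
      ∑ j ∈ J, ((#{i ∈ S | r i j} : ℝ) - q * #{i ∈ I | r i j}) ^ 2 ≤ 2 * (q * #I) * #J := by
  let v (i : α) : EuclideanSpace ℝ (Option J) :=
    WithLp.toLp 2 fun o => o.elim √(#J : ℝ) fun j => if r i j then 1 else 0
  obtain ⟨S, hS, hle⟩ := exists_subset_norm_sum_sub_smul_sum_sq_le v hq₀ hq₁ I
  have hJ : √(#J : ℝ) ^ 2 = #J := Real.sq_sqrt (Nat.cast_nonneg _)
  have hv (i : α) : ‖v i‖ ^ 2 ≤ 2 * #J := by
    have hle_one (j : J) : (if r i j then (1 : ℝ) else 0) ^ 2 ≤ 1 := by split_ifs <;> simp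
    have hsome : ∑ j : J, v i (some j) ^ 2 ≤ #J :=
      (sum_le_card_nsmul univ _ 1 fun j _ => hle_one j).trans (by simp)
    have hnone : v i none ^ 2 = #J := hJ
    rw [EuclideanSpace.real_norm_sq_eq, Fintype.sum_option]
    linarith
  refine ⟨S, hS, ?_⟩
  calc _ = ‖∑ i ∈ S, v i - q • ∑ i ∈ I, v i‖ ^ 2 := by
        rw [EuclideanSpace.real_norm_sq_eq, Fintype.sum_option, ← sum_coe_sort J]
        simp only [univ_eq_attach, PiLp.sub_apply, WithLp.ofLp_sum, Finset.sum_apply,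
          Option.elim_none, sum_const, nsmul_eq_mul, PiLp.smul_apply, smul_eq_mul,
          Option.elim_some, sum_boole, v]
        linear_combination -(#S - q * #I) ^ 2 * hJ
    _ ≤ q * ∑ i ∈ I, 2 * (#J : ℝ) := hle.trans (by gcongr; exact hv _)
    _ = 2 * (q * #I) * #J := by
      rw [sum_const, nsmul_eq_mul]
      ring

theorem exists_subset_card_interedges_le (r : α → β → Prop) [∀ a, DecidablePred (r a)]
    (I : Finset α) (J : Finset β) {q : ℝ} (hq₀ : 0 ≤ q) (hq₁ : q ≤ 1) (hI : 2 ≤ q * #I) :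
    ∃ S ⊆ I, #S ≤ 2 * (q * #I) ∧ ∀ J' ⊆ J,
      q * #(Rel.interedges r I J') ≤ #(Rel.interedges r S J') + √(2 * (q * #I)) * #J := by
  rcases J.eq_empty_or_nonempty with rfl | hJ
  · refine ⟨∅, empty_subset _, by rw [card_empty, Nat.cast_zero]; positivity, fun J' hJ' => ?_⟩
    rw [subset_empty.1 hJ']
    simp [Rel.interedges]
  obtain ⟨S, hS, hle⟩ := exists_subset_sum_sq_card_sub_le r I J hq₀ hq₁
  set dev := fun j => (#{i ∈ S | r i j} : ℝ) - q * #{i ∈ I | r i j}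
  have hJ_pos : 0 < (#J : ℝ) := by exact_mod_cast hJ.card_pos
  have hdev : 0 ≤ ∑ j ∈ J, dev j ^ 2 := sum_nonneg fun j _ => sq_nonneg _
  refine ⟨S, hS, ?_, fun J' hJ' => ?_⟩
  · have hsq : ((#S : ℝ) - q * #I) ^ 2 ≤ (q * #I) ^ 2 := by
      refine le_of_mul_le_mul_left (a := (#J : ℝ)) ?_ hJ_pos
      nlinarith [mul_nonneg hJ_pos.le (mul_nonneg (sub_nonneg.2 hI) (by linarith : 0 ≤ q * #I))]
    have := (abs_le.1 (abs_le_of_sq_le_sq hsq (by positivity))).2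
    linarith
  · have hsum : ∑ j ∈ J', dev j =
        #(Rel.interedges r S J') - q * #(Rel.interedges r I J') := by
      simp only [dev, sum_sub_distrib, ← mul_sum, card_interedges_eq_sum_right, Nat.cast_sum]
    have hsq : (∑ j ∈ J', dev j) ^ 2 ≤ 2 * (q * #I) * (#J : ℝ) ^ 2 := calc
      (∑ j ∈ J', dev j) ^ 2 ≤ #J' * ∑ j ∈ J', dev j ^ 2 := sq_sum_le_card_mul_sum_sq
      _ ≤ #J * ∑ j ∈ J, dev j ^ 2 := by gcongr
      _ ≤ #J * (2 * (q * #I) * #J) := by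
        gcongr
        exact (le_add_of_nonneg_left (by positivity)).trans hle
      _ = _ := by ring
    have habs := Real.abs_le_sqrt hsq
    rw [Real.sqrt_mul (by positivity), Real.sqrt_sq hJ_pos.le, hsum] at habs
    linarith [(abs_le.1 habs).1]

end Sampling

theorem sqrt_mul_max_le {a b c d : ℝ} (ha : 0 ≤ a) (hab : 100 * a ≤ b) (hcd : c ≤ d)
    (hbd : b ≤ d) : √a * max a c ≤ √b * d / 10 := by
  have hsqrt : √a ≤ √b / 10 := by
    rw [Real.sqrt_le_left (by positivity), div_pow, Real.sq_sqrt (by linarith)]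
    linarith
  calc √a * max a c ≤ √b / 10 * d :=
        mul_le_mul hsqrt (max_le (by linarith) hcd) (le_max_of_le_left ha) (by positivity)
    _ = _ := by ring

section IncidenceBound

variable {K : Type*} [Field K] [DecidableEq K]

open Classical in
/- A low degree surface through a sparse random sample of `I` contains every line which meets many
lines of `I`. -/
theorem exists_card_interedges_not_vanishesOnLine_le [Infinite K] {I J : Finset (K × K × K)}
    (hI_inj : Set.InjOn Prod.fst (I : Set (K × K × K))) (hI : 180000 ≤ #I) :
    ∃ P : MvPolynomial (Fin 3) K, P ≠ 0 ∧ (P.totalDegree : ℝ) ≤ √(#I : ℝ) / 25 ∧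
      #(Rel.interedges Incident I {j ∈ J | ¬ VanishesOnLine 0 P j}) ≤
        4050 * (√(#I : ℝ) * #J) := by
  have hsq : √(#I : ℝ) ^ 2 = #I := Real.sq_sqrt (Nat.cast_nonneg _)
  have hIr : (180000 : ℝ) ≤ #I := by exact_mod_cast hI
  obtain ⟨S, hSI, hS, hSJ⟩ := exists_subset_card_interedges_le Incident I J (q := 1 / 90000)
    (by norm_num) (by norm_num) (by linarith)
  obtain ⟨P, hP0, hP, hPS⟩ := exists_ne_zero_vanishesOnLine_of_card_le 1 (S := S)
    (u := √(#I : ℝ) / 300) (by nlinarith [Real.sqrt_nonneg (#I : ℝ)]) (by linarith)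
  refine ⟨P, hP0, by linarith, ?_⟩
  set J' : Finset (K × K × K) := {j ∈ J | ¬ VanishesOnLine 0 P j}
  have hmeet : #(Rel.interedges Incident S J') ≤ #J * P.totalDegree := by
    rw [card_interedges_eq_sum_right]
    refine (sum_le_card_nsmul J' _ P.totalDegree fun j hj => ?_).trans
      (Nat.mul_le_mul_right _ (card_filter_le J _))
    refine card_le_totalDegree_of_forall_incident (mem_filter.1 hj).2
      (hI_inj.mono ((coe_subset.2 (filter_subset _ S)).trans (coe_subset.2 hSI))) fun i hi => ?_
    obtain ⟨hiS, hij⟩ := mem_filter.1 hi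
    exact ⟨hPS i hiS, hij.symm⟩
  have hmeet' : (#(Rel.interedges Incident S J') : ℝ) ≤ #J * (√(#I : ℝ) / 25) :=
    calc (#(Rel.interedges Incident S J') : ℝ) ≤ #J * P.totalDegree := by exact_mod_cast hmeet
      _ ≤ #J * (√(#I : ℝ) / 25) := by gcongr; linarith
  have hdev : √(2 * (1 / 90000 * #I)) * #J ≤ √(#I : ℝ) / 200 * #J := by
    gcongr
    rw [Real.sqrt_le_left (by positivity), div_pow, hsq]
    linarith
  linarith [hSJ J' (filter_subset _ _)]

theorem exists_card_interedges_le_add [Infinite K] {p : ℕ} [CharP K p] {k : ℕ}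
    {I J : Finset (K × K × K)} (hI_inj : Set.InjOn Prod.fst (I : Set (K × K × K)))
    (hJ_inj : Set.InjOn Prod.fst (J : Set (K × K × K))) (hI : AtMostCollinear K k I)
    (hcard : 180000 ≤ #I) (hp : #I ≤ p ^ 2) :
    ∃ I' ⊆ I, ∃ J' ⊆ J, ∃ J₁ ⊆ J, 100 * #I' ≤ #I ∧ 100 * #J' ≤ #I ∧
      (#(Rel.interedges Incident I J) : ℝ) ≤ 4051 * (√(#I : ℝ) * max (#I : ℝ) #J) + k * #(J \ J₁)
        + #(Rel.interedges Incident I' J₁) + #(Rel.interedges Incident J' I) := by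
  classical
  have hsq : √(#I : ℝ) ^ 2 = #I := Real.sq_sqrt (Nat.cast_nonneg _)
  obtain ⟨P, hP0, hP, hout⟩ := exists_card_interedges_not_vanishesOnLine_le (J := J) hI_inj hcard
  have hPp : P.totalDegree < p := by
    have hIp : √(#I : ℝ) ≤ p := Real.sqrt_le_left (by positivity) |>.2 (by exact_mod_cast hp)
    have hpos : 0 < √(#I : ℝ) := Real.sqrt_pos.2 (by exact_mod_cast (by omega : 0 < #I))
    exact_mod_cast (by linarith : (P.totalDegree : ℝ) < p)
  have hdeg : 100 * (6 * P.totalDegree ^ 2) ≤ #I := by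
    have : 100 * (6 * (P.totalDegree : ℝ) ^ 2) ≤ #I := calc
      100 * (6 * (P.totalDegree : ℝ) ^ 2) ≤ 100 * (6 * (√(#I : ℝ) / 25) ^ 2) := by gcongr
      _ ≤ (#I : ℝ) := by linarith
    exact_mod_cast this
  let Jin : Finset (K × K × K) := {j ∈ J | VanishesOnLine 0 P j}
  have hJin : Jin ⊆ J := filter_subset _ _
  obtain ⟨I', hI', J', hJ', J₀, hJ₀, hI'_card, hJ'_card, hin⟩ :=
    exists_card_interedges_le_of_vanishesOnLine hP0 hPp hI_inj
      (hJ_inj.mono (coe_subset.2 hJin)) hI fun j hj => (mem_filter.1 hj).2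
  refine ⟨I', hI', J', hJ'.trans hJin, Jin \ J₀, sdiff_subset.trans hJin, by omega, by omega, ?_⟩
  have hJ₀_le : (k : ℝ) * #J₀ ≤ k * #(J \ (Jin \ J₀)) := by
    gcongr
    exact subset_sdiff.2 ⟨hJ₀.trans hJin, disjoint_sdiff⟩
  have hsplit : #(Rel.interedges Incident I J) = #(Rel.interedges Incident I Jin) +
      #(Rel.interedges Incident I {j ∈ J | ¬ VanishesOnLine 0 P j}) := by
    simp only [card_interedges_eq_sum_right, Jin, sum_filter_add_sum_filter_not]
  rw [Rel.card_interedges_comm J']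
  have hin' : (#(Rel.interedges Incident I Jin) : ℝ) ≤ #I * P.totalDegree + k * #J₀
      + #(Rel.interedges Incident I' (Jin \ J₀)) + #(Rel.interedges Incident I J') := by
    exact_mod_cast hin
  have hmax : √(#I : ℝ) * #J ≤ √(#I : ℝ) * max (#I : ℝ) #J := by gcongr; exact le_max_right _ _
  have hdegree : (#I : ℝ) * P.totalDegree ≤ max (#I : ℝ) #J * (√(#I : ℝ) / 25) := by
    gcongr
    exact le_max_left _ _
  rw [hsplit, Nat.cast_add]
  linarith

theorem card_interedges_incident_le [Infinite K] {p : ℕ} [CharP K p] {k : ℕ}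
    {I J : Finset (K × K × K)} (hI_inj : Set.InjOn Prod.fst (I : Set (K × K × K)))
    (hJ_inj : Set.InjOn Prod.fst (J : Set (K × K × K))) (hI : AtMostCollinear K k I)
    (hJ : AtMostCollinear K k J) (hp : #I ≤ p ^ 2) :
    (#(Rel.interedges Incident I J) : ℝ) ≤
      10000 * (√(#I : ℝ) * max (#I : ℝ) #J) + k * (2 * #I + #J) := by
  induction hn : #I using Nat.strong_induction_on generalizing I J with | _ n ih
  subst hn
  rcases lt_or_ge #I 180000 with hsmall | hlarge
  · have hsqrt : √(#I : ℝ) ≤ 10000 := by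
      rw [Real.sqrt_le_left (by norm_num)]
      have : (#I : ℝ) < 180000 := by exact_mod_cast hsmall
      linarith
    calc (#(Rel.interedges Incident I J) : ℝ) ≤ #I * #J := by
          exact_mod_cast Rel.card_interedges_le_mul Incident I J
      _ = √(#I : ℝ) * (√(#I : ℝ) * #J) := by
        rw [← mul_assoc, Real.mul_self_sqrt (Nat.cast_nonneg _)]
      _ ≤ 10000 * (√(#I : ℝ) * max (#I : ℝ) #J) := by gcongr; exact le_max_right _ _
      _ ≤ _ := le_add_of_nonneg_right (by positivity)
  obtain ⟨I', hI', J', hJ', J₁, hJ₁, hI'_card, hJ'_card, hle⟩ :=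
    exists_card_interedges_le_add hI_inj hJ_inj hI hlarge hp
  have h₁ := ih #I' (by omega) (hI_inj.mono (coe_subset.2 hI')) (hJ_inj.mono (coe_subset.2 hJ₁))
    (hI.subset hI') (hJ.subset hJ₁) (by omega) rfl
  have h₂ := ih #J' (by omega) (hJ_inj.mono (coe_subset.2 hJ')) hI_inj (hJ.subset hJ') hI
    (by omega) rfl
  have hroot₁ : √(#I' : ℝ) * max (#I' : ℝ) #J₁ ≤ √(#I : ℝ) * max (#I : ℝ) #J / 10 :=
    sqrt_mul_max_le (Nat.cast_nonneg _) (by exact_mod_cast hI'_card)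
      (le_max_of_le_right (by exact_mod_cast card_le_card hJ₁)) (le_max_left _ _)
  have hroot₂ : √(#J' : ℝ) * max (#J' : ℝ) #I ≤ √(#I : ℝ) * max (#I : ℝ) #J / 10 :=
    sqrt_mul_max_le (Nat.cast_nonneg _) (by exact_mod_cast hJ'_card) (le_max_left _ _)
      (le_max_left _ _)
  have hlin : (k : ℝ) * #(J \ J₁) + k * (2 * #I' + #J₁) + k * (2 * #J' + #I) ≤
      k * (2 * #I + #J) := by
    have := card_sdiff_add_card_eq_card hJ₁
    rw [← mul_add, ← mul_add]
    refine mul_le_mul_of_nonneg_left ?_ (Nat.cast_nonneg _)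
    exact_mod_cast (by omega : #(J \ J₁) + (2 * #I' + #J₁) + (2 * #J' + #I) ≤ 2 * #I + #J)
  have hnonneg : 0 ≤ √(#I : ℝ) * max (#I : ℝ) #J := by positivity
  linarith

end IncidenceBound

section Collinearity

variable {K V W : Type*} [Field K] [AddCommGroup V] [Module K V] [AddCommGroup W] [Module K W]

theorem collinear_image_inv_smul {s : Set V} (hs : Collinear K s) (L : V →ₗ[K] W) (ℓ : V →ₗ[K] K)
    {c : K} (hc : ∀ x ∈ s, c + ℓ x ≠ 0) : Collinear K ((fun x => (c + ℓ x)⁻¹ • L x) '' s) := by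
  rcases s.eq_empty_or_nonempty with rfl | ⟨x₀, hx₀⟩
  · simpa using collinear_empty K W
  obtain ⟨v, hv⟩ := (collinear_iff_of_mem hx₀).1 hs
  refine (collinear_iff_of_mem (Set.mem_image_of_mem _ hx₀)).2
    ⟨L v - (ℓ v * (c + ℓ x₀)⁻¹) • L x₀, ?_⟩
  rintro _ ⟨x, hx, rfl⟩
  obtain ⟨r, rfl⟩ := hv x hx
  have h₀ := hc x₀ hx₀
  have h := hc _ hx
  simp only [vadd_eq_add, map_add, map_smul, smul_eq_mul] at h ⊢
  refine ⟨r * (c + (r * ℓ v + ℓ x₀))⁻¹, ?_⟩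
  match_scalars
  · field_simp
  · field_simp
    ring

theorem AtMostCollinear.image {K' W' : Type*} [Field K'] [AddCommGroup W'] [Module K' W']
    [DecidableEq W'] {k : ℕ} {s : Finset V} (hs : AtMostCollinear K k s) {φ : V → W'} {ψ : W' → V}
    (hψφ : ∀ x ∈ s, ψ (φ x) = x)
    (hψ : ∀ t ⊆ s.image φ, Collinear K' (t : Set W') → Collinear K (ψ '' t)) :
    AtMostCollinear K' k (s.image φ) := by
  classical
  intro t ht hcol
  have hφψ (y) (hy : y ∈ t) : φ (ψ y) = y := by
    obtain ⟨x, hx, rfl⟩ := mem_image.1 (ht hy)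
    rw [hψφ x hx]
  rw [← card_image_of_injOn (f := ψ) fun y hy z hz h => by rw [← hφψ y hy, h, hφψ z hz]]
  refine hs _ (image_subset_iff.2 fun y hy => ?_) (by simpa using hψ t ht hcol)
  obtain ⟨x, hx, rfl⟩ := mem_image.1 (ht hy)
  rwa [hψφ x hx]

end Collinearity

theorem card_interedges_image {α β γ δ : Type*} [DecidableEq γ] [DecidableEq δ]
    {r : α → β → Prop} {r' : γ → δ → Prop}
    [∀ a, DecidablePred (r a)] [∀ c, DecidablePred (r' c)] {s : Finset α} {t : Finset β}
    {φ : α → γ} {ψ : β → δ} (hφ : Set.InjOn φ s) (hψ : Set.InjOn ψ t)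
    (h : ∀ a ∈ s, ∀ b ∈ t, r' (φ a) (ψ b) ↔ r a b) :
    #(Rel.interedges r' (s.image φ) (t.image ψ)) = #(Rel.interedges r s t) := by
  rw [card_interedges_eq_sum_left, card_interedges_eq_sum_left, sum_image hφ]
  refine sum_congr rfl fun a ha => ?_
  rw [filter_image, card_image_of_injOn (hψ.mono (filter_subset _ _)),
    filter_congr fun b hb => h a ha b hb]

section GenericPosition

variable {K : Type*} [Field K]

/-- A linear change of the parameters of one family of lines; `perspectivity c d` is the
corresponding change for the other family. -/
def shear (c d : K) : K × K × K →ₗ[K] K × K × K :=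
  LinearMap.id + ((c • LinearMap.snd K K K + d • LinearMap.fst K K K) ∘ₗ
    LinearMap.snd K K (K × K)).prod 0

theorem shear_apply (c d : K) (x : K × K × K) :
    shear c d x = (x.1 + (c * x.2.2 + d * x.2.1), x.2) := by
  simp [shear, Prod.ext_iff]

theorem shear_neg_shear (c d : K) (x : K × K × K) : shear (-c) (-d) (shear c d x) = x := by
  simp only [shear_apply]
  ext
  · ring
  · rfl
  · rfl

/-- The projective map of `K × K × K` dual to a shear, with value `0` where its denominator
vanishes. -/
def perspectivity (c d : K) (y : K × K × K) : K × K × K :=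
  (1 + d * y.2.2)⁻¹ • shear c 0 y

theorem perspectivity_apply (c d : K) (y : K × K × K) : perspectivity c d y =
    ((1 + d * y.2.2)⁻¹ * (y.1 + c * y.2.2), (1 + d * y.2.2)⁻¹ * y.2.1,
      (1 + d * y.2.2)⁻¹ * y.2.2) := by
  simp [perspectivity, shear_apply, Prod.ext_iff]

theorem incident_shear_perspectivity {c d : K} {x y : K × K × K} (hy : 1 + d * y.2.2 ≠ 0) :
    Incident (shear c d x) (perspectivity c d y) ↔ Incident x y := by
  simp only [Incident, shear_apply, perspectivity_apply]
  field_simp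
  constructor <;> intro h <;> linear_combination h

theorem one_sub_mul_perspectivity {c d : K} {y : K × K × K} (hy : 1 + d * y.2.2 ≠ 0) :
    1 + -d * (perspectivity c d y).2.2 = (1 + d * y.2.2)⁻¹ := by
  rw [perspectivity_apply]
  field_simp
  ring

theorem perspectivity_neg_perspectivity {c d : K} {y : K × K × K} (hy : 1 + d * y.2.2 ≠ 0) :
    perspectivity (-c) (-d) (perspectivity c d y) = y := by
  have := shear_neg_shear c 0 y
  rw [neg_zero] at this
  rw [perspectivity, one_sub_mul_perspectivity hy, inv_inv, perspectivity, map_smul,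
    smul_inv_smul₀ hy, this]

theorem AtMostCollinear.image_shear [DecidableEq K] {k : ℕ} {X : Finset (K × K × K)}
    (hX : AtMostCollinear K k X) (c d : K) : AtMostCollinear K k (X.image (shear c d)) :=
  hX.image (fun x _ => shear_neg_shear c d x) fun t _ ht => by
    simpa using collinear_image_inv_smul ht (shear (-c) (-d)) 0 (c := 1) (by simp)

theorem AtMostCollinear.image_perspectivity [DecidableEq K] {k : ℕ} {Y : Finset (K × K × K)}
    (hY : AtMostCollinear K k Y) {c d : K} (hd : ∀ y ∈ Y, 1 + d * y.2.2 ≠ 0) :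
    AtMostCollinear K k (Y.image (perspectivity c d)) := by
  refine hY.image (fun y hy => perspectivity_neg_perspectivity (hd y hy)) fun t ht hcol => ?_
  refine collinear_image_inv_smul hcol (shear (-c) 0)
    (-d • LinearMap.snd K K K ∘ₗ LinearMap.snd K K (K × K)) (c := 1) fun z hz => ?_
  obtain ⟨y, hy, rfl⟩ := mem_image.1 (ht hz)
  have := one_sub_mul_perspectivity (c := c) (hd y hy) ▸ inv_ne_zero (hd y hy)
  simpa using this

open Polynomial in
theorem exists_forall_eval_ne_zero [Infinite K] {T : Finset K[X]} (hT : 0 ∉ T) :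
    ∃ θ : K, ∀ f ∈ T, f.eval θ ≠ 0 := by
  contrapose! hT
  have hprod : ∏ f ∈ T, f = 0 := zero_of_eval_zero _ fun θ => by
    obtain ⟨f, hf, h0⟩ := hT θ
    rw [eval_prod]
    exact prod_eq_zero hf h0
  obtain ⟨f, hf, h0⟩ := prod_eq_zero_iff.1 hprod
  exact h0 ▸ hf

open Polynomial in
theorem exists_generic_shear [Infinite K] (I J : Finset (K × K × K)) :
    ∃ θ : K, Set.InjOn (fun i => (shear θ (θ ^ 2) i).1) I ∧ (∀ j ∈ J, 1 + θ ^ 2 * j.2.2 ≠ 0) ∧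
      ∀ j ∈ J, ∀ j' ∈ J, (perspectivity θ (θ ^ 2) j).1 = (perspectivity θ (θ ^ 2) j').1 →
        j.1 = j'.1 := by
  classical
  let F (a : (K × K × K) × K × K × K) : K[X] :=
    C (a.1.1 - a.2.1) + C (a.1.2.2 - a.2.2.2) * X + C (a.1.2.1 - a.2.2.1) * X ^ 2
  let G (j : K × K × K) : K[X] := 1 + C j.2.2 * X ^ 2
  let H (a : (K × K × K) × K × K × K) : K[X] :=
    (C a.1.1 + C a.1.2.2 * X) * G a.2 - (C a.2.1 + C a.2.2.2 * X) * G a.1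
  have hF (a) (h : F a = 0) : a.1 = a.2 := by
    have h₀ := congrArg (coeff · 0) h
    have h₁ := congrArg (coeff · 1) h
    have h₂ := congrArg (coeff · 2) h
    simp only [F, coeff_add, coeff_C_mul, coeff_X, coeff_X_pow, coeff_C] at h₀ h₁ h₂
    ext
    · simpa [sub_eq_zero] using h₀
    · simpa [sub_eq_zero] using h₂
    · simpa [sub_eq_zero] using h₁
  have hG (j) : G j ≠ 0 := fun h => by simpa [G] using congrArg (eval 0) h
  have hH (a) (h : H a = 0) : a.1.1 = a.2.1 := by
    simpa [H, G, sub_eq_zero] using congrArg (eval 0) h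
  obtain ⟨θ, hθ⟩ := exists_forall_eval_ne_zero (T := I.offDiag.image F ∪ J.image G ∪
    {a ∈ J ×ˢ J | a.1.1 ≠ a.2.1}.image H) <| by
      simp only [mem_union, mem_image, mem_offDiag, mem_filter, not_or, not_exists, not_and]
      exact ⟨⟨fun a ha h => ha.2.2 (hF a h), fun j _ => hG j⟩, fun a ha h => ha.2 (hH a h)⟩
  simp only [forall_mem_union, forall_mem_image] at hθ
  obtain ⟨⟨hFθ, hGθ⟩, hHθ⟩ := hθ
  simp only [F, G, H, eval_add, eval_sub, eval_mul, eval_C, eval_X, eval_pow, eval_one]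
    at hFθ hGθ hHθ
  have hden (j) (hj : j ∈ J) : 1 + θ ^ 2 * j.2.2 ≠ 0 := mul_comm (θ ^ 2) _ ▸ hGθ hj
  refine ⟨θ, fun i hi i' hi' h => ?_, hden, fun j hj j' hj' h => ?_⟩
  · by_contra hne
    apply hFθ (x := (i, i')) (mem_offDiag.2 ⟨hi, hi', hne⟩)
    simp only [shear_apply] at h
    linear_combination h
  · by_contra hne
    apply hHθ (x := (j, j')) (mem_filter.2 ⟨mk_mem_product hj hj', hne⟩)
    simp only [perspectivity_apply] at h
    have := hden j hj
    have := hden j' hj'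
    field_simp at h
    linear_combination h

variable [DecidableEq K]

theorem exists_card_interedges_eq_injOn_fst [Infinite K] (I J : Finset (K × K × K)) :
    ∃ I' J' : Finset (K × K × K), #I' ≤ #I ∧ #J' ≤ #J ∧
      (∀ k, AtMostCollinear K k I → AtMostCollinear K k I') ∧
      (∀ k, AtMostCollinear K k J → AtMostCollinear K k J') ∧
      #(Rel.interedges Incident I' J') = #(Rel.interedges Incident I J) ∧
      Set.InjOn Prod.fst (I' : Set (K × K × K)) ∧
      (Set.InjOn Prod.fst (J : Set (K × K × K)) → Set.InjOn Prod.fst (J' : Set (K × K × K))) := by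
  obtain ⟨θ, hI, hden, hJ⟩ := exists_generic_shear I J
  have hshear : Function.Injective (shear θ (θ ^ 2)) :=
    Function.LeftInverse.injective (shear_neg_shear θ (θ ^ 2))
  have hpersp : Set.InjOn (perspectivity θ (θ ^ 2)) J := fun j hj j' hj' h => by
    rw [← perspectivity_neg_perspectivity (hden j hj), h,
      perspectivity_neg_perspectivity (hden j' hj')]
  refine ⟨I.image (shear θ (θ ^ 2)), J.image (perspectivity θ (θ ^ 2)), card_image_le,
    card_image_le, fun k hk => hk.image_shear _ _, fun k hk => hk.image_perspectivity hden,
    card_interedges_image hshear.injOn hpersp fun i _ j hj =>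
      incident_shear_perspectivity (hden j hj), ?_, fun hJ_inj => ?_⟩
  · rw [coe_image]
    exact Set.InjOn.image_of_comp hI
  · rw [coe_image]
    exact Set.InjOn.image_of_comp fun j hj j' hj' h => hJ_inj hj hj' (hJ j hj j' hj' h)

theorem card_interedges_incident_le_of_card_le [Infinite K] {p : ℕ} [CharP K p] {n k : ℕ}
    {I J : Finset (K × K × K)} (hI : #I ≤ n) (hJ : #J ≤ n) (hn : n ≤ p ^ 2)
    (hI_col : AtMostCollinear K k I) (hJ_col : AtMostCollinear K k J) :
    (#(Rel.interedges Incident I J) : ℝ) ≤ 10000 * (√n * n) + 3 * k * n := by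
  obtain ⟨I₁, J₁, hI₁, hJ₁, hI₁_col, hJ₁_col, hcard₁, hI₁_inj, -⟩ :=
    exists_card_interedges_eq_injOn_fst I J
  obtain ⟨J₂, I₂, hJ₂, hI₂, hJ₂_col, hI₂_col, hcard₂, hJ₂_inj, hI₂_inj⟩ :=
    exists_card_interedges_eq_injOn_fst J₁ I₁
  have hle := card_interedges_incident_le hJ₂_inj (hI₂_inj hI₁_inj) (hJ₂_col _ (hJ₁_col _ hJ_col))
    (hI₂_col _ (hI₁_col _ hI_col)) (((hJ₂.trans hJ₁).trans hJ).trans hn)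
  rw [hcard₂, Rel.card_interedges_comm, hcard₁] at hle
  have hI₂n : (#I₂ : ℝ) ≤ n := by exact_mod_cast (hI₂.trans hI₁).trans hI
  have hJ₂n : (#J₂ : ℝ) ≤ n := by exact_mod_cast (hJ₂.trans hJ₁).trans hJ
  calc _ ≤ _ := hle
    _ ≤ 10000 * (√n * n) + k * (2 * n + n) := by
      gcongr
      exact max_le hJ₂n hI₂n
    _ = _ := by ring

end GenericPosition

section Product

variable {K E V : Type*} [Field K] [AddCommGroup E] [Module K E] [AddCommGroup V] [Module K V]

theorem AtMostCollinear.product {k : ℕ} {s : Finset E} {t : Finset V} (hs : #s ≤ k)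
    (ht : AtMostCollinear K k t) : AtMostCollinear K k (s ×ˢ t) := by
  classical
  intro u hu hcol
  by_cases hinj : Set.InjOn Prod.snd (u : Set (E × V))
  · rw [← card_image_of_injOn hinj]
    refine ht _ (image_subset_iff.2 fun x hx => (mem_product.1 (hu hx)).2) ?_
    simpa using collinear_image_inv_smul hcol (LinearMap.snd K E V) 0 (c := 1) (by simp)
  · obtain ⟨x, hx, y, hy, hxy, hne⟩ : ∃ x ∈ u, ∃ y ∈ u, x.2 = y.2 ∧ x ≠ y := by
      simpa only [Set.InjOn, mem_coe, not_forall, exists_prop] using hinj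
    obtain ⟨v, hv⟩ := (collinear_iff_of_mem hx).1 hcol
    have hv₂ : v.2 = 0 := by
      obtain ⟨r, rfl⟩ := hv y hy
      have hr : r ≠ 0 := by
        rintro rfl
        simp at hne
      simpa [hr] using hxy
    refine (card_le_card_of_injOn Prod.fst (fun z hz => (mem_product.1 (hu hz)).1)
      fun z hz z' hz' h => Prod.ext h ?_).trans hs
    obtain ⟨r, rfl⟩ := hv z hz
    obtain ⟨r', rfl⟩ := hv z' hz'
    simp [hv₂]

end Product

section BaseChange

variable {F K : Type*} [Field F] [Field K] (φ : F →+* K)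

theorem exists_smul_eq_of_smul_map_eq {u w : F × F × F} (hu : u ≠ 0) {r : K}
    (h : r • Prod.map φ (Prod.map φ φ) u = Prod.map φ (Prod.map φ φ) w) : ∃ d : F, d • u = w := by
  obtain ⟨u₁, u₂, u₃⟩ := u
  obtain ⟨w₁, w₂, w₃⟩ := w
  simp only [Prod.map_apply, Prod.smul_mk, smul_eq_mul, Prod.mk.injEq] at h
  obtain ⟨h₁, h₂, h₃⟩ := h
  obtain ⟨d, rfl⟩ : ∃ d, φ d = r := by
    have hmem {a b : F} (ha : a ≠ 0) (hab : r * φ a = φ b) : ∃ d, φ d = r :=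
      ⟨b / a, by rw [map_div₀, ← hab, mul_div_cancel_right₀ _ ((map_ne_zero φ).2 ha)]⟩
    by_cases hu₁ : u₁ = 0
    · by_cases hu₂ : u₂ = 0
      · exact hmem (fun hu₃ => hu (by simp [hu₁, hu₂, hu₃])) h₃
      · exact hmem hu₂ h₂
    · exact hmem hu₁ h₁
  simp only [← map_mul] at h₁ h₂ h₃
  exact ⟨d, by simp [φ.injective h₁, φ.injective h₂, φ.injective h₃]⟩

theorem collinear_of_collinear_image_map {t : Set (F × F × F)}
    (ht : Collinear K (Prod.map φ (Prod.map φ φ) '' t)) : Collinear F t := by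
  rcases t.subsingleton_or_nontrivial with h | ⟨x, hx, y, hy, hxy⟩
  · rcases h.eq_empty_or_singleton with rfl | ⟨x, rfl⟩
    exacts [collinear_empty F _, collinear_singleton F x]
  have hsub (z z' : F × F × F) : Prod.map φ (Prod.map φ φ) (z - z') =
      Prod.map φ (Prod.map φ φ) z - Prod.map φ (Prod.map φ φ) z' := by simp [Prod.map]
  obtain ⟨v, hv⟩ := (collinear_iff_of_mem (Set.mem_image_of_mem _ hx)).1 ht
  obtain ⟨r, hr⟩ := hv _ (Set.mem_image_of_mem _ hy)
  have hrv : r • v = Prod.map φ (Prod.map φ φ) (y - x) := by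
    rw [hsub, hr, vadd_eq_add, add_sub_cancel_right]
  have hr₀ : r ≠ 0 := by
    rintro rfl
    have hinj := φ.injective.prodMap (φ.injective.prodMap φ.injective)
    exact hxy (hinj (by simpa using hr)).symm
  refine (collinear_iff_of_mem hx).2 ⟨y - x, fun z hz => ?_⟩
  obtain ⟨q, hq⟩ := hv _ (Set.mem_image_of_mem _ hz)
  obtain ⟨d, hd⟩ := exists_smul_eq_of_smul_map_eq φ (sub_ne_zero.2 hxy.symm) (r := q * r⁻¹)
    (w := z - x) <| by
      rw [← hrv, hsub, hq, smul_smul, inv_mul_cancel_right₀ hr₀, vadd_eq_add, add_sub_cancel_right]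
  exact ⟨d, by rw [hd, vadd_eq_add, sub_add_cancel]⟩

theorem AtMostCollinear.image_map [DecidableEq K] {k : ℕ} {s : Finset (F × F × F)}
    (hs : AtMostCollinear F k s) : AtMostCollinear K k (s.image (Prod.map φ (Prod.map φ φ))) := by
  have hinj := φ.injective.prodMap (φ.injective.prodMap φ.injective)
  refine hs.image (fun x _ => Function.leftInverse_invFun hinj x) fun t ht hcol =>
    collinear_of_collinear_image_map φ ?_
  rwa [Set.image_image, Set.image_congr, Set.image_id']
  intro y hy
  obtain ⟨x, -, rfl⟩ := mem_image.1 (ht hy)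
  rw [Function.leftInverse_invFun hinj]

theorem card_interedges_incident_le_of_charP [DecidableEq F] {p : ℕ} [CharP F p] {n k : ℕ}
    {I J : Finset (F × F × F)} (hI : #I ≤ n) (hJ : #J ≤ n) (hn : n ≤ p ^ 2)
    (hI_col : AtMostCollinear F k I) (hJ_col : AtMostCollinear F k J) :
    (#(Rel.interedges Incident I J) : ℝ) ≤ 10000 * (√n * n) + 3 * k * n := by
  classical
  let φ : F →+* AlgebraicClosure F := algebraMap F _
  have : CharP (AlgebraicClosure F) p := charP_of_injective_algebraMap φ.injective p
  have : Infinite (AlgebraicClosure F) := IsAlgClosed.instInfinite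
  have hinj := φ.injective.prodMap (φ.injective.prodMap φ.injective)
  rw [← card_interedges_image (r' := Incident) hinj.injOn hinj.injOn fun i _ j _ => by
    simp only [Incident, Prod.map_fst, Prod.map_snd, ← map_mul, ← map_add, φ.injective.eq_iff]]
  exact card_interedges_incident_le_of_card_le (card_image_le.trans hI) (card_image_le.trans hJ) hn
    (hI_col.image_map φ) (hJ_col.image_map φ)

end BaseChange

section Energy

theorem sq_card_le_card_mul_card_filter_eq {α β : Type*} [DecidableEq β] {s : Finset α}
    {t : Finset β} {f : α → β} (hf : ∀ a ∈ s, f a ∈ t) :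
    #s ^ 2 ≤ #t * #{ab ∈ s ×ˢ s | f ab.1 = f ab.2} := by
  have hpair : #{ab ∈ s ×ˢ s | f ab.1 = f ab.2} = ∑ b ∈ t, #{a ∈ s | f a = b} ^ 2 := by
    rw [card_eq_sum_card_fiberwise (f := fun ab => f ab.1) (t := t)
      fun ab hab => hf _ (mem_product.1 (mem_filter.1 hab).1).1]
    refine sum_congr rfl fun b _ => ?_
    rw [sq, ← card_product]
    congr 1
    grind
  rw [hpair, card_eq_sum_card_fiberwise hf]
  exact sq_sum_le_card_mul_sum_sq

variable {F : Type*} [Field F] [DecidableEq F]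

-- Swapping the first coordinates of two pairs `(w, l)`, `(w', l')` with `l(w) = l'(w')` gives an
-- incidence between triples.
theorem card_filter_eq_le_card_interedges {W : Finset F} {L : Finset (F × F)} :
    #{ab ∈ (W ×ˢ L) ×ˢ (W ×ˢ L) | ab.1.2.1 + ab.1.2.2 * ab.1.1 = ab.2.2.1 + ab.2.2.2 * ab.2.1} ≤
      #(Rel.interedges Incident (W ×ˢ L) (W ×ˢ L)) := by
  refine card_le_card_of_injOn (fun ab => ((ab.2.1, ab.1.2), (ab.1.1, ab.2.2))) ?_ ?_
  · intro ab hab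
    simp only [coe_filter, mem_product, Set.mem_ofPred_eq] at hab
    simp only [mem_coe, Rel.mem_interedges_iff, mem_product, Incident]
    tauto
  · rintro ⟨⟨w, l⟩, w', l'⟩ _ ⟨⟨u, m⟩, u', m'⟩ _ h
    simp only [Prod.mk.injEq] at h ⊢
    tauto

theorem sq_card_filter_mem_le {p : ℕ} [CharP F p] {W V : Finset F} {L : Finset (F × F)} {k : ℕ}
    (hW : #W ≤ k) (hL : AtMostCollinear F k L) (hp : #W * #L ≤ p ^ 2) :
    (#{a ∈ W ×ˢ L | a.2.1 + a.2.2 * a.1 ∈ V} : ℝ) ^ 2 ≤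
      #V * (10000 * (√(#W * #L) * (#W * #L)) + 3 * k * (#W * #L)) := by
  have hcard : #(W ×ˢ L) = #W * #L := card_product W L
  have hcol := AtMostCollinear.product hW hL
  have hinc := card_interedges_incident_le_of_charP hcard.le hcard.le hp hcol hcol
  have hval : ∀ a ∈ {a ∈ W ×ˢ L | a.2.1 + a.2.2 * a.1 ∈ V}, a.2.1 + a.2.2 * a.1 ∈ V :=
    fun a ha => (mem_filter.1 ha).2
  have hsq := (sq_card_le_card_mul_card_filter_eq hval).trans <| Nat.mul_le_mul_left _ <|
    (card_le_card <| filter_subset_filter _ <|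
      product_subset_product (filter_subset _ _) (filter_subset _ _)).trans
      card_filter_eq_le_card_interedges
  push_cast at hinc
  calc _ ≤ (#V : ℝ) * #(Rel.interedges Incident (W ×ˢ L) (W ×ˢ L)) := by exact_mod_cast hsq
    _ ≤ _ := by gcongr

end Energy

section Levels

/-- The points `P α s`, for `α ∈ A` and `s ∈ X`, are distinct, and a line through two points of the
row `P α ·` meets no other row. The point `P α s` stands for the affine function
`w ↦ (P α s).1 + (P α s).2 * w`. -/
structure RowSeparated {F : Type*} [Field F] (A X : Finset F) (P : F → F → F × F) : Prop where
  injOn : Set.InjOn (Function.uncurry P) (A ×ˢ X : Finset (F × F))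
  eq_of_collinear : ∀ α ∈ A, ∀ s ∈ X, ∀ s' ∈ X, s ≠ s' → ∀ β ∈ A, ∀ r ∈ X,
    Collinear F {P α s, P α s', P β r} → α = β

variable {F : Type*} [Field F] {A X D W V : Finset F} {P : F → F → F × F}

theorem RowSeparated.mono (hP : RowSeparated A X P) (hD : D ⊆ X) : RowSeparated A D P where
  injOn := hP.injOn.mono (coe_subset.2 (product_subset_product_right hD))
  eq_of_collinear α hα s hs s' hs' hne β hβ r hr :=
    hP.eq_of_collinear α hα s (hD hs) s' (hD hs') hne β hβ r (hD hr)

variable [DecidableEq F]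

theorem RowSeparated.atMostCollinear_image (hP : RowSeparated A X P) :
    AtMostCollinear F (max #A #X) ((A ×ˢ X).image (Function.uncurry P)) := by
  intro t ht hcol
  obtain ⟨u, hu, rfl⟩ := subset_image_iff.1 ht
  refine card_image_le.trans ?_
  by_cases hinj : Set.InjOn Prod.fst (u : Set (F × F))
  · refine le_max_of_le_left (card_le_card_of_injOn Prod.fst ?_ hinj)
    exact fun x hx => (mem_product.1 (hu hx)).1
  · obtain ⟨⟨α, s⟩, hx, ⟨_, s'⟩, hy, rfl, hne⟩ :
        ∃ x ∈ u, ∃ y ∈ u, x.1 = y.1 ∧ x ≠ y := by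
      simpa only [Set.InjOn, mem_coe, not_forall, exists_prop] using hinj
    have hrow (z) (hz : z ∈ u) : α = z.1 := by
      obtain ⟨hα, hs⟩ := mem_product.1 (hu hx)
      obtain ⟨-, hs'⟩ := mem_product.1 (hu hy)
      obtain ⟨hβ, hr⟩ := mem_product.1 (hu hz)
      refine hP.eq_of_collinear α hα s hs s' hs' (fun h => hne (by rw [h])) z.1 hβ z.2 hr
        (hcol.subset ?_)
      simp only [Set.insert_subset_iff, Set.singleton_subset_iff, coe_image]
      exact ⟨⟨_, hx, rfl⟩, ⟨_, hy, rfl⟩, ⟨_, hz, rfl⟩⟩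
    refine le_max_of_le_right (card_le_card_of_injOn Prod.snd ?_ ?_)
    · exact fun x hx => (mem_product.1 (hu hx)).2
    · exact fun z hz z' hz' h => Prod.ext ((hrow z hz).symm.trans (hrow z' hz')) h

theorem RowSeparated.mul_card_le_card_filter (hP : RowSeparated A D P) {τ : ℝ}
    (hτ : ∀ α ∈ A, ∀ s ∈ D, τ ≤ #{w ∈ W | (P α s).1 + (P α s).2 * w ∈ V}) :
    τ * (#A * #D) ≤ #{a ∈ W ×ˢ (A ×ˢ D).image (Function.uncurry P) | a.2.1 + a.2.2 * a.1 ∈ V} := by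
  rw [card_filter, sum_product_right, sum_image hP.injOn]
  simp only [← card_filter]
  push_cast
  calc τ * (#A * #D) = #(A ×ˢ D) • τ := by rw [card_product, nsmul_eq_mul]; push_cast; ring
    _ ≤ _ := card_nsmul_le_sum _ _ _ fun z hz =>
      hτ z.1 (mem_product.1 hz).1 z.2 (mem_product.1 hz).2

theorem RowSeparated.card_mul_card_mul_pow_four_le {p : ℕ} [CharP F p] (hP : RowSeparated A D P)
    {τ : ℝ} (hτ₀ : 0 ≤ τ) (hτ : ∀ α ∈ A, ∀ s ∈ D, τ ≤ #{w ∈ W | (P α s).1 + (P α s).2 * w ∈ V})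
    (hp : #W * (#A * #D) ≤ p ^ 2) (hW : #W ≤ #A * #D) (hA : #A ≤ #W * #D) (hD : #D ≤ #W * #A) :
    #A * #D * τ ^ 4 ≤ 10003 ^ 2 * (#V ^ 2 * #W ^ 3) := by
  set k := max #W (max #A #D)
  set L := (A ×ˢ D).image (Function.uncurry P)
  have hL : #L = #A * #D := by rw [card_image_of_injOn hP.injOn, card_product]
  have hL_col : AtMostCollinear F k L := fun t ht hcol =>
    (hP.atMostCollinear_image t ht hcol).trans (le_max_right _ _)
  have henergy := sq_card_filter_mem_le (V := V) (le_max_left #W _) hL_col (hL ▸ hp)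
  have hk : (k : ℝ) ≤ √(#W * (#A * #D)) := by
    refine Real.le_sqrt_of_sq_le ?_
    have hk_cases : k = #W ∨ k = #A ∨ k = #D := by grind
    exact_mod_cast show k ^ 2 ≤ #W * (#A * #D) by
      rcases hk_cases with h | h | h <;> rw [h] <;> nlinarith
  have hcount := hP.mul_card_le_card_filter hτ
  simp only [hL, Nat.cast_mul] at henergy
  set n : ℝ := #A * #D
  have hn : 0 ≤ n := by positivity
  have hsq : (τ * n) ^ 2 ≤ #V * (10003 * (√(#W * n) * (#W * n))) := by
    calc (τ * n) ^ 2 ≤ _ := pow_le_pow_left₀ (by positivity) hcount 2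
      _ ≤ _ := henergy
      _ ≤ #V * (10000 * (√(#W * n) * (#W * n)) + 3 * √(#W * n) * (#W * n)) := by gcongr
      _ = _ := by ring
  have hpow : n * τ ^ 4 * n ^ 3 ≤ 10003 ^ 2 * (#V ^ 2 * #W ^ 3) * n ^ 3 := by
    calc n * τ ^ 4 * n ^ 3 = ((τ * n) ^ 2) ^ 2 := by ring
      _ ≤ (#V * (10003 * (√(#W * n) * (#W * n)))) ^ 2 := by gcongr
      _ = 10003 ^ 2 * #V ^ 2 * (√(#W * n)) ^ 2 * (#W * n) ^ 2 := by ring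
      _ = _ := by rw [Real.sq_sqrt (by positivity)]; ring
  rcases hn.eq_or_lt with h | h
  · rw [← h, zero_mul]
    positivity
  · exact le_of_mul_le_mul_right hpow (pow_pos h 3)

end Levels

section Dyadic

theorem exists_subset_lt_card_mul_le_two_mul {α : Type*} {s : Finset α} {x y : ℝ} (hx : 0 < x)
    (hxy : x ≤ y) (hy : y < #s * x) : ∃ t ⊆ s, y < #t * x ∧ #t * x ≤ 2 * y := by
  have hy₀ : 0 ≤ y := hx.le.trans hxy
  have hfloor : ⌊y / x⌋₊ < #s := (Nat.floor_lt (by positivity)).2 ((div_lt_iff₀ hx).2 hy)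
  obtain ⟨t, hts, ht⟩ := exists_subset_card_eq (Nat.succ_le_of_lt hfloor)
  refine ⟨t, hts, ?_, ?_⟩
  · rw [ht, ← div_lt_iff₀ hx]
    exact_mod_cast Nat.lt_floor_add_one (y / x)
  · have := (le_div_iff₀ hx).1 (Nat.floor_le (by positivity : 0 ≤ y / x))
    rw [ht]
    push_cast
    linarith

theorem sum_pow_succ_le_of_card_filter_mul_pow_le {ι : Type*} {s : Finset ι} {r : ι → ℝ}
    (hr : ∀ x ∈ s, 0 ≤ r x) {T B : ℝ} (hT : 0 < T) (n J : ℕ)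
    (hB : ∀ τ, T ≤ τ → #{x ∈ s | τ ≤ r x} * τ ^ (n + 1) ≤ B) (hJ : ∀ x ∈ s, r x < 2 ^ J * T) :
    ∑ x ∈ s, r x ^ (n + 1) ≤ T ^ n * ∑ x ∈ s, r x + J * (2 ^ (n + 1) * B) := by
  have hpoint (x) (hx : x ∈ s) : r x ^ (n + 1) ≤ T ^ n * r x +
      ∑ j ∈ range J, if 2 ^ j * T ≤ r x then (2 * (2 ^ j * T)) ^ (n + 1) else 0 := by
    have hrx := hr x hx
    have hnonneg (j) : 0 ≤ if 2 ^ j * T ≤ r x then (2 * (2 ^ j * T)) ^ (n + 1) else 0 := by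
      positivity
    rcases le_or_gt T (r x) with hTr | hrT
    · obtain ⟨j, hj, hj'⟩ := exists_nat_pow_near ((one_le_div hT).2 hTr) one_lt_two
      rw [le_div_iff₀ hT] at hj
      rw [div_lt_iff₀ hT, pow_succ', mul_assoc] at hj'
      have hjJ : j < J := (pow_lt_pow_iff_right₀ one_lt_two).1 <|
        lt_of_mul_lt_mul_right (hj.trans_lt (hJ x hx)) hT.le
      calc r x ^ (n + 1) ≤ (2 * (2 ^ j * T)) ^ (n + 1) := by gcongr
        _ = if 2 ^ j * T ≤ r x then (2 * (2 ^ j * T)) ^ (n + 1) else 0 := (if_pos hj).symm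
        _ ≤ _ := single_le_sum (fun i _ => hnonneg i) (mem_range.2 hjJ)
        _ ≤ _ := le_add_of_nonneg_left (by positivity)
    · calc r x ^ (n + 1) ≤ T ^ n * r x := by rw [pow_succ]; gcongr
        _ ≤ _ := le_add_of_nonneg_right (sum_nonneg fun j _ => hnonneg j)
  calc ∑ x ∈ s, r x ^ (n + 1) ≤ _ := sum_le_sum hpoint
    _ = T ^ n * ∑ x ∈ s, r x +
        ∑ j ∈ range J, 2 ^ (n + 1) * (#{x ∈ s | 2 ^ j * T ≤ r x} * (2 ^ j * T) ^ (n + 1)) := by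
      rw [sum_add_distrib, mul_sum, sum_comm]
      congr 1
      refine sum_congr rfl fun j _ => ?_
      rw [← sum_filter, sum_const, nsmul_eq_mul, mul_pow]
      ring
    _ ≤ T ^ n * ∑ x ∈ s, r x + ∑ j ∈ range J, 2 ^ (n + 1) * B := by
      gcongr with j
      exact hB _ (le_mul_of_one_le_left hT.le (one_le_pow₀ one_le_two))
    _ = _ := by rw [sum_const, card_range, nsmul_eq_mul]

end Dyadic

section Threshold

theorem le_mul_of_mul_le_of_lt_mul_mul_pow_four {a d ν ω τ : ℝ} (ha : 0 < a) (hτ : 0 < τ)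
    (haτ : a * τ ≤ ν * ω) (hτω : τ ≤ ω) (h : ν ^ 2 * ω ^ 3 < a * d * τ ^ 4) : a ≤ ω * d := by
  have hω : 0 < ω := hτ.trans_le hτω
  refine le_of_mul_le_mul_right ?_ (by positivity : 0 < a * τ ^ 4)
  calc a * (a * τ ^ 4) = (a * τ) ^ 2 * τ ^ 2 := by ring
    _ ≤ (ν * ω) ^ 2 * ω ^ 2 := by gcongr
    _ = ω * (ν ^ 2 * ω ^ 3) := by ring
    _ ≤ ω * (a * d * τ ^ 4) := by gcongr
    _ = ω * d * (a * τ ^ 4) := by ring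

theorem exists_dyadic_threshold {N ν ω y c : ℝ} (hN : 0 < N) (hν : 0 < ν) (hω : 0 < ω)
    (hc : 1 ≤ c) (hNy : N ^ 2 ≤ y ^ 3 * ν) :
    ∃ T > 0, T ^ 3 * N = c * (ν ^ 2 * ω ^ 3) ∧ c * (ω * (ν ^ 2 * ω ^ 3)) ≤ y ^ 2 * T ^ 4 := by
  set M := ν ^ 2 * ω ^ 3 with hM
  have hx : 0 < c * M / N := by positivity
  have hT : ((c * M / N) ^ ((1 : ℝ) / 3)) ^ 3 * N = c * M := by
    rw [← Real.rpow_natCast, ← Real.rpow_mul hx.le]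
    norm_num
    field_simp
  refine ⟨_, Real.rpow_pos_of_pos hx _, hT, ?_⟩
  set T := (c * M / N) ^ ((1 : ℝ) / 3)
  refine le_of_pow_le_pow_left₀ three_ne_zero (by positivity) ?_
  refine le_of_mul_le_mul_right ?_ (by positivity : 0 < N ^ 4)
  calc (c * (ω * M)) ^ 3 * N ^ 4 = c ^ 3 * (ω * M) ^ 3 * (N ^ 2) ^ 2 := by ring
    _ ≤ c ^ 4 * (ω * M) ^ 3 * (y ^ 3 * ν) ^ 2 := by gcongr; norm_num
    _ = y ^ 6 * (c * M) ^ 4 := by rw [hM]; ring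
    _ = (y ^ 2 * T ^ 4) ^ 3 * N ^ 4 := by rw [← hT]; ring

theorem le_mul_of_pow_three_mul_eq {x ν ω q n T c : ℝ} (hx : 0 ≤ x) (hxν : x ≤ ν) (hxω : x ≤ ω)
    (hq : 0 < q) (hqνω : q ≤ ν * ω) (hn : 1 ≤ n) (hc : 1 ≤ c) (hT : 0 ≤ T)
    (hTq : T ^ 3 * (n * q) = c * (ν ^ 2 * ω ^ 3)) : x ≤ n * T := by
  have hν : 0 ≤ ν := hx.trans hxν
  have hω : 0 ≤ ω := hx.trans hxω
  refine le_of_pow_le_pow_left₀ three_ne_zero (by positivity) ?_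
  refine le_of_mul_le_mul_right ?_ (by positivity : 0 < n * q)
  calc x ^ 3 * (n * q) = x * x * x * (n * q) := by ring
    _ ≤ ν * ω * ω * (n * (ν * ω)) := by gcongr
    _ = n * (1 * (ν ^ 2 * ω ^ 3)) := by ring
    _ ≤ n ^ 3 * (c * (ν ^ 2 * ω ^ 3)) := by
      gcongr
      exact le_self_pow₀ hn three_ne_zero
    _ = (n * T) ^ 3 * (n * q) := by rw [← hTq]; ring

theorem natLog_add_one_mul_log_two_le {n : ℕ} (hn : n ≠ 0) :
    (Nat.log 2 n + 1 : ℕ) * Real.log 2 ≤ Real.log (2 * n) := by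
  rw [← Real.log_pow]
  refine Real.log_le_log (by positivity) ?_
  rw [pow_succ']
  exact_mod_cast Nat.mul_le_mul_left 2 (Nat.pow_log_le_self 2 hn)

theorem sum_pow_four_le_of_card_filter_mul_pow_le {ι : Type*} {s : Finset ι} {r : ι → ℝ}
    (hr : ∀ x ∈ s, 0 ≤ r x) {T q B : ℝ} (hT : 0 < T) (hsum : ∑ x ∈ s, r x ≤ q)
    (hTq : T ^ 3 * q ≤ 2 * B) (hB : ∀ τ, T ≤ τ → #{x ∈ s | τ ≤ r x} * τ ^ 4 ≤ B) {n : ℕ}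
    (hn : n ≠ 0) (hrn : ∀ x ∈ s, r x ≤ n * T) :
    ∑ x ∈ s, r x ^ 4 ≤ 18 * B * (Real.log (2 * n) / Real.log 2) := by
  set J := Nat.log 2 n + 1
  have hB₀ : 0 ≤ B := (hB T le_rfl).trans' (by positivity)
  have hJ (x) (hx : x ∈ s) : r x < 2 ^ J * T :=
    (hrn x hx).trans_lt (by gcongr; exact_mod_cast Nat.lt_pow_succ_log_self one_lt_two n)
  have hlog : (J : ℝ) ≤ Real.log (2 * n) / Real.log 2 :=
    (le_div_iff₀ (Real.log_pos one_lt_two)).2 (natLog_add_one_mul_log_two_le hn)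
  calc ∑ x ∈ s, r x ^ 4 ≤ T ^ 3 * ∑ x ∈ s, r x + J * (2 ^ 4 * B) :=
        sum_pow_succ_le_of_card_filter_mul_pow_le hr hT 3 J hB hJ
    _ ≤ T ^ 3 * q + J * (2 ^ 4 * B) := by gcongr
    _ ≤ 1 * (2 * B) + J * (2 ^ 4 * B) := by linarith
    _ ≤ J * (2 * B) + J * (2 ^ 4 * B) := by
      gcongr
      exact_mod_cast Nat.le_add_left 1 _
    _ = 18 * B * J := by ring
    _ ≤ 18 * B * (Real.log (2 * n) / Real.log 2) := by gcongr

end Threshold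

section RichLines

variable {F : Type*} [Field F] [DecidableEq F] {p : ℕ} [CharP F p] {A X D W V : Finset F}
  {P : F → F → F × F}

theorem RowSeparated.card_mul_card_mul_pow_four_le_of_mul_le (hP : RowSeparated A D P)
    (hA : A.Nonempty) {τ : ℝ} (hτ₀ : 0 < τ)
    (hτ : ∀ α ∈ A, ∀ s ∈ D, τ ≤ #{w ∈ W | (P α s).1 + (P α s).2 * w ∈ V}) (hτW : τ ≤ #W)
    (hτV : τ ≤ #V) (hAτ : #A * τ ≤ #V * #W) (hDτ : #D * τ ≤ #V * #W)
    (hp : 2 * 10003 ^ 2 * (#W * (#V ^ 2 * #W ^ 3)) ≤ p ^ 2 * τ ^ 4) :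
    #A * #D * τ ^ 4 ≤ 10003 ^ 2 * (#V ^ 2 * #W ^ 3) := by
  by_contra! hlt
  set M : ℝ := #V ^ 2 * #W ^ 3 with hM
  have hA₀ : (0 : ℝ) < #A := by exact_mod_cast hA.card_pos
  have hM₀ : 0 ≤ M := by positivity
  have hAM : #A * τ ^ 4 ≤ M := by
    calc #A * τ ^ 4 = #A * τ * (τ * τ * τ) := by ring
      _ ≤ #V * #W * (#V * #W * #W) := by gcongr
      _ = M := by rw [hM]; ring
  obtain ⟨E, hED, hE, hE'⟩ := exists_subset_lt_card_mul_le_two_mul (s := D) (x := #A * τ ^ 4)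
    (y := 10003 ^ 2 * M) (by positivity) (by linarith) (by linarith)
  have hME : M < #A * #E * τ ^ 4 := by linarith
  have hE₀ : (0 : ℝ) < #E :=
    pos_of_mul_pos_left ((by positivity : 0 ≤ 10003 ^ 2 * M).trans_lt hE) (by positivity)
  have hEτ : #E * τ ≤ #V * #W := hDτ.trans' (by gcongr)
  have hWE : (#W : ℝ) ≤ #A * #E := by
    refine le_of_mul_le_mul_right (hME.le.trans' ?_) (pow_pos hτ₀ 4)
    calc #W * τ ^ 4 = #W * (τ * τ * τ * τ) := by ring
      _ ≤ #W * (#V * #V * #W * #W) := by gcongr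
      _ = M := by rw [hM]; ring
  have hAE : (#A : ℝ) ≤ #W * #E := le_mul_of_mul_le_of_lt_mul_mul_pow_four hA₀ hτ₀ hAτ hτW hME
  have hEA : (#E : ℝ) ≤ #W * #A :=
    le_mul_of_mul_le_of_lt_mul_mul_pow_four hE₀ hτ₀ hEτ hτW (mul_comm (#A : ℝ) _ ▸ hME)
  have hpE : (#W : ℝ) * (#A * #E) ≤ p ^ 2 := by
    refine le_of_mul_le_mul_right (hp.trans' ?_) (pow_pos hτ₀ 4)
    calc #W * (#A * #E) * τ ^ 4 = #W * (#E * (#A * τ ^ 4)) := by ring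
      _ ≤ #W * (2 * (10003 ^ 2 * M)) := by gcongr
      _ = _ := by ring
  have hle := (hP.mono hED).card_mul_card_mul_pow_four_le hτ₀.le
    (fun α hα s hs => hτ α hα s (hED hs)) (by exact_mod_cast hpE) (by exact_mod_cast hWE)
    (by exact_mod_cast hAE) (by exact_mod_cast hEA)
  linarith

theorem RowSeparated.card_mul_card_filter_mul_pow_four_le (hP : RowSeparated A X P)
    (hA : A.Nonempty) (hAVW : #A ≤ max #V #W) {r : F → ℕ}
    (hr : ∀ α ∈ A, ∀ s ∈ X, r s ≤ #{w ∈ W | (P α s).1 + (P α s).2 * w ∈ V})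
    (hrV : ∀ s ∈ X, r s ≤ #V) (hsum : ∑ s ∈ X, r s ≤ #V * #W) {τ : ℝ} (hτ₀ : 0 < τ)
    (hp : 2 * 10003 ^ 2 * (#W * (#V ^ 2 * #W ^ 3)) ≤ p ^ 2 * τ ^ 4) :
    #A * #{s ∈ X | τ ≤ r s} * τ ^ 4 ≤ 10003 ^ 2 * (#V ^ 2 * #W ^ 3) := by
  set D := {s ∈ X | τ ≤ r s}
  rcases D.eq_empty_or_nonempty with hD | ⟨s, hs⟩
  · rw [hD, card_empty, Nat.cast_zero, mul_zero, zero_mul]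
    positivity
  obtain ⟨α, hα⟩ := hA
  obtain ⟨hsX, hsτ⟩ := mem_filter.1 hs
  have hrW : r s ≤ #W := (hr α hα s hsX).trans (card_filter_le _ _)
  have hAr : #A * r s ≤ #V * #W := by
    calc #A * r s ≤ max #V #W * min #V #W := Nat.mul_le_mul hAVW (le_min (hrV s hsX) hrW)
      _ = #V * #W := max_mul_min _ _
  refine (hP.mono (filter_subset _ _)).card_mul_card_mul_pow_four_le_of_mul_le ⟨α, hα⟩ hτ₀
    (fun β hβ t ht => ?_) (hsτ.trans (mod_cast hrW)) (hsτ.trans (mod_cast hrV s hsX)) ?_ ?_ hp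
  · obtain ⟨htX, htτ⟩ := mem_filter.1 ht
    exact htτ.trans (mod_cast hr β hβ t htX)
  · calc #A * τ ≤ #A * r s := by gcongr
      _ ≤ #V * #W := by exact_mod_cast hAr
  · calc #D * τ ≤ ∑ t ∈ D, (r t : ℝ) := by
          rw [← nsmul_eq_mul]
          exact card_nsmul_le_sum _ _ _ fun t ht => (mem_filter.1 ht).2
      _ ≤ ∑ t ∈ X, (r t : ℝ) :=
        sum_le_sum_of_subset_of_nonneg (filter_subset _ _) fun _ _ _ => Nat.cast_nonneg _
      _ ≤ #V * #W := by exact_mod_cast hsum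

theorem RowSeparated.sum_pow_four_le (hP : RowSeparated A X P) (hAVW : #A ≤ max #V #W) {r : F → ℕ}
    (hr : ∀ α ∈ A, ∀ s ∈ X, r s ≤ #{w ∈ W | (P α s).1 + (P α s).2 * w ∈ V})
    (hrV : ∀ s ∈ X, r s ≤ #V) {q : ℕ} (hq : q ≠ 0) (hsum : ∑ s ∈ X, r s ≤ q) (hqVW : q ≤ #V * #W)
    {n m : ℕ} (hn : n ≠ 0) (hnm : n ≤ m * #A) (hp : (n * q) ^ 2 ≤ p ^ 3 * #V) :
    ∑ s ∈ X, (r s : ℝ) ^ 4 ≤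
      18 * 10003 ^ 2 / Real.log 2 * m * (#V ^ 2 * #W ^ 3 / n) * Real.log (2 * n) := by
  have hmA : m * #A ≠ 0 := (hnm.trans_lt' (Nat.pos_of_ne_zero hn)).ne'
  obtain ⟨α, hα⟩ := card_ne_zero.1 (right_ne_zero_of_mul hmA)
  have hVW : #V * #W ≠ 0 := (hqVW.trans_lt' (Nat.pos_of_ne_zero hq)).ne'
  have hν : (0 : ℝ) < #V := by exact_mod_cast Nat.pos_of_ne_zero (left_ne_zero_of_mul hVW)
  have hω : (0 : ℝ) < #W := by exact_mod_cast Nat.pos_of_ne_zero (right_ne_zero_of_mul hVW)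
  have hn₁ : (1 : ℝ) ≤ n := by exact_mod_cast Nat.one_le_iff_ne_zero.2 hn
  have hm₁ : (1 : ℝ) ≤ m := by
    exact_mod_cast Nat.one_le_iff_ne_zero.2 (left_ne_zero_of_mul hmA)
  have hqVW' : (q : ℝ) ≤ #V * #W := by exact_mod_cast hqVW
  obtain ⟨T, hT, hTq, hTp⟩ := exists_dyadic_threshold (N := n * q) (c := 2 * 10003 ^ 2) (y := p)
    (by positivity) hν hω (by norm_num) (by exact_mod_cast hp)
  set M : ℝ := #V ^ 2 * #W ^ 3
  have hlevel (τ : ℝ) (hτ : T ≤ τ) : #{s ∈ X | τ ≤ r s} * τ ^ 4 ≤ m * (10003 ^ 2 * M) / n := by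
    rw [le_div_iff₀ (by positivity)]
    calc #{s ∈ X | τ ≤ r s} * τ ^ 4 * n
        ≤ #{s ∈ X | τ ≤ r s} * τ ^ 4 * (m * #A) := by gcongr; exact_mod_cast hnm
      _ = m * (#A * #{s ∈ X | τ ≤ r s} * τ ^ 4) := by ring
      _ ≤ m * (10003 ^ 2 * M) := mul_le_mul_of_nonneg_left
        (hP.card_mul_card_filter_mul_pow_four_le ⟨α, hα⟩ hAVW hr hrV (hsum.trans hqVW)
          (hT.trans_le hτ) (hTp.trans (by gcongr))) (by positivity)
  have hrn (s) (hs : s ∈ X) : (r s : ℝ) ≤ n * T :=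
    le_mul_of_pow_three_mul_eq (Nat.cast_nonneg _) (by exact_mod_cast hrV s hs)
      (by exact_mod_cast (hr α hα s hs).trans (card_filter_le _ _)) (by positivity) hqVW' hn₁
      (by norm_num) hT.le hTq
  have hTq' : T ^ 3 * q ≤ 2 * (m * (10003 ^ 2 * M) / n) := by
    rw [← mul_div_assoc, le_div_iff₀ (by positivity)]
    calc T ^ 3 * q * n = 1 * (2 * 10003 ^ 2 * M) := by rw [← hTq]; ring
      _ ≤ m * (2 * 10003 ^ 2 * M) := by gcongr
      _ = 2 * (m * (10003 ^ 2 * M)) := by ring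
  calc ∑ s ∈ X, (r s : ℝ) ^ 4 ≤ _ :=
        sum_pow_four_le_of_card_filter_mul_pow_le (fun _ _ => Nat.cast_nonneg _) hT
          (by exact_mod_cast hsum) hTq' hlevel hn hrn
    _ = _ := by ring

end RichLines

section Rows

variable {F : Type*} [Field F] {A X : Finset F} {g h : F → F}

theorem sub_mul_sub_eq_of_collinear {x y z : F × F} (hxyz : Collinear F {x, y, z}) :
    (y.1 - x.1) * (z.2 - x.2) = (y.2 - x.2) * (z.1 - x.1) := by
  obtain ⟨v, hv⟩ := (collinear_iff_of_mem (Set.mem_insert x {y, z})).1 hxyz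
  obtain ⟨a, rfl⟩ := hv y (by simp)
  obtain ⟨b, rfl⟩ := hv z (by simp)
  simp
  ring

theorem rowSeparated_mul (hg : ∀ α ∈ A, g α ≠ 0) (hinj : Set.InjOn (fun α => g α * h α) A) :
    RowSeparated A X fun α s => (g α * h α, g α * s) where
  injOn := by
    rintro ⟨α, s⟩ hα ⟨β, r⟩ hβ he
    simp only [coe_product, Set.mem_prod, mem_coe] at hα hβ
    obtain ⟨hαβ, hsr⟩ := Prod.mk.inj he
    obtain rfl := hinj hα.1 hβ.1 hαβ
    exact Prod.ext rfl (mul_left_cancel₀ (hg α hα.1) hsr)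
  eq_of_collinear α hα s _ s' _ hne β hβ r _ hcol := by
    have hdet := sub_mul_sub_eq_of_collinear hcol
    rw [sub_self, zero_mul, ← mul_sub] at hdet
    have hgs := mul_ne_zero (hg α hα) (sub_ne_zero.2 hne.symm)
    refine hinj hα hβ (sub_eq_zero.1 ((mul_eq_zero.1 hdet.symm).resolve_left hgs)).symm

theorem rowSeparated_inv (hX : 0 ∉ X) (hg : ∀ α ∈ A, g α ≠ 0)
    (hinj : Set.InjOn (fun α => g α * h α) A) :
    RowSeparated A X fun α s => (-(h α * s⁻¹), (g α)⁻¹ * s⁻¹) where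
  injOn := by
    have hratio (α) (hα : α ∈ A) (s) (hs : s ∈ X) :
        h α * s⁻¹ / ((g α)⁻¹ * s⁻¹) = g α * h α := by
      have := hg α hα
      have := ne_of_mem_of_not_mem hs hX
      field_simp
    rintro ⟨α, s⟩ hα ⟨β, r⟩ hβ he
    simp only [coe_product, Set.mem_prod, mem_coe] at hα hβ
    obtain ⟨he₁, he₂⟩ := Prod.mk.inj he
    have hαβ : g α * h α = g β * h β := by
      rw [← hratio α hα.1 s hα.2, ← hratio β hβ.1 r hβ.2, neg_inj.1 he₁, he₂]
    obtain rfl := hinj hα.1 hβ.1 hαβ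
    exact Prod.ext rfl (inv_injective (mul_left_cancel₀ (inv_ne_zero (hg α hα.1)) he₂))
  eq_of_collinear α hα s hs s' hs' hne β hβ r hr hcol := by
    have hdet := sub_mul_sub_eq_of_collinear hcol
    refine hinj hα hβ ?_
    have hs₀ := ne_of_mem_of_not_mem hs hX
    have hs'₀ := ne_of_mem_of_not_mem hs' hX
    have hr₀ := ne_of_mem_of_not_mem hr hX
    have hα₀ := hg α hα
    have hβ₀ := hg β hβ
    refine mul_left_cancel₀ (mul_ne_zero (sub_ne_zero.2 hne) hs₀) ?_
    field_simp at hdet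
    linear_combination -hdet

theorem exists_subset_injOn_card_le_mul {α β : Type*} [DecidableEq β] {f : α → β} {s : Finset α}
    {m : ℕ} (hm : ∀ b, #{a ∈ s | f a = b} ≤ m) : ∃ t ⊆ s, Set.InjOn f t ∧ #s ≤ m * #t := by
  obtain ⟨u, hus, hu⟩ := Set.exists_subset_bijOn (s : Set α) f
  lift u to Finset α using s.finite_toSet.subset hus
  refine ⟨u, coe_subset.1 hus, hu.injOn, ?_⟩
  have himage : s.image f = u.image f := by
    rw [← coe_inj, coe_image, coe_image, hu.image_eq]
  rw [← card_image_of_injOn hu.injOn, ← himage]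
  exact card_le_mul_card_image s m fun b _ => hm b

end Rows

section Quotients

variable {F : Type*} [Field F] [DecidableEq F] {B C : Finset F} {x : F}

/-- The number of representations of `x` as a quotient `b / c` with `b ∈ B` and `c ∈ C`. -/
def quotientCount (B C : Finset F) (x : F) : ℕ := #{bc ∈ B ×ˢ C | bc.1 / bc.2 = x}

theorem sum_quotientCount (B C : Finset F) : ∑ x ∈ B / C, quotientCount B C x = #B * #C := by
  rw [← card_product]
  exact (card_eq_sum_card_fiberwise fun bc hbc =>
    div_mem_div (mem_product.1 hbc).1 (mem_product.1 hbc).2).symm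

theorem quotientCount_eq_zero (hx : x ∉ B / C) : quotientCount B C x = 0 := by
  rw [quotientCount, card_eq_zero, filter_eq_empty_iff]
  rintro bc hbc rfl
  exact hx (div_mem_div (mem_product.1 hbc).1 (mem_product.1 hbc).2)

theorem zero_notMem_div (hB : 0 ∉ B) (hC : 0 ∉ C) : 0 ∉ B / C := by
  rintro h
  obtain ⟨b, hb, c, hc, hbc⟩ := mem_div.1 h
  rcases div_eq_zero_iff.1 hbc with rfl | rfl
  · exact hB hb
  · exact hC hc

theorem quotientCount_eq_card_filter (hC : 0 ∉ C) :
    quotientCount B C x = #{c ∈ C | x * c ∈ B} := by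
  rw [quotientCount, card_filter, sum_product_right, card_filter]
  refine sum_congr rfl fun c hc => ?_
  simp only [div_eq_iff (ne_of_mem_of_not_mem hc hC), sum_ite_eq']

theorem quotientCount_le_card_right (hC : 0 ∉ C) : quotientCount B C x ≤ #C := by
  rw [quotientCount_eq_card_filter hC]
  exact card_filter_le _ _

theorem quotientCount_le_card_left (hC : 0 ∉ C) (hx : x ≠ 0) : quotientCount B C x ≤ #B := by
  rw [quotientCount_eq_card_filter hC]
  exact card_le_card_of_injOn (x * ·) (fun c hc => (mem_filter.1 hc).2)
    (mul_right_injective₀ hx).injOn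

end Quotients

section Application

variable {F : Type*} [Field F] [DecidableEq F] {p : ℕ} [CharP F p] {g h : F → F} {A B C : Finset F}
  {x α : F}

theorem card_le_card_image₂ (hα : α ∈ A) (hg : g α ≠ 0) :
    #B ≤ #(image₂ (fun x y => g x * (h x + y)) A B) := by
  have hinj : Function.Injective fun y => g α * (h α + y) :=
    (mul_right_injective₀ hg).comp (add_right_injective (h α))
  rw [← card_image_of_injective B hinj]
  exact card_le_card (image_subset_image₂_right (f := fun x y => g x * (h x + y)) hα)

theorem quotientCount_le_card_filter (hC : 0 ∉ C) (hα : α ∈ A) :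
    quotientCount B C x ≤
      #{w ∈ C | g α * h α + g α * x * w ∈ image₂ (fun x y => g x * (h x + y)) A B} := by
  rw [quotientCount_eq_card_filter hC]
  refine card_le_card (monotone_filter_right C fun c _ hc => ?_)
  rw [mul_assoc, ← mul_add]
  exact mem_image₂_of_mem hα hc

theorem quotientCount_le_card_filter_image₂ (hC : 0 ∉ C) (hx : x ≠ 0) (hα : α ∈ A) (hg : g α ≠ 0) :
    quotientCount B C x ≤ #{w ∈ image₂ (fun x y => g x * (h x + y)) A B |
      -(h α * x⁻¹) + (g α)⁻¹ * x⁻¹ * w ∈ C} := by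
  rw [quotientCount_eq_card_filter hC]
  refine card_le_card_of_injOn (fun c => g α * (h α + x * c)) (fun c hc => ?_) ?_
  · obtain ⟨hc, hxc⟩ := mem_filter.1 hc
    refine mem_filter.2 ⟨mem_image₂_of_mem hα hxc, ?_⟩
    convert hc using 1
    field_simp
    ring
  · exact ((mul_right_injective₀ hg).comp
      ((add_right_injective _).comp (mul_right_injective₀ hx))).injOn

theorem fourth_multiplicative_energy_bound_general {m : ℕ} (hA : A.Nonempty) (hC : C.Nonempty)
    (hB₀ : 0 ∉ B) (hC₀ : 0 ∉ C) (hg : ∀ α ∈ A, g α ≠ 0) (hm : ∀ t, #{α ∈ A | g α * h α = t} ≤ m)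
    (hAB : #A ≤ #B) (hp : #A ^ 2 * #B * #C ^ 2 ≤ p ^ 3) (hp' : #A ^ 2 * #B ^ 2 * #C ≤ p ^ 3) :
    ∑ x ∈ B / C, (quotientCount B C x : ℝ) ^ 4 ≤ 18 * 10003 ^ 2 / Real.log 2 * m *
      min ((#(image₂ (fun x y => g x * (h x + y)) A B) : ℝ) ^ 3 * #C ^ 2 / #A)
        ((#(image₂ (fun x y => g x * (h x + y)) A B) : ℝ) ^ 2 * #C ^ 3 / #A) *
      Real.log (2 * #A) := by
  have hX : 0 ∉ B / C := zero_notMem_div hB₀ hC₀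
  obtain ⟨A', hA', hinj, hcard⟩ := exists_subset_injOn_card_le_mul hm
  obtain ⟨α, hα⟩ := hA
  set V := image₂ (fun x y => g x * (h x + y)) A B
  have hBV : #B ≤ #V := card_le_card_image₂ hα (hg α hα)
  have hA'V : #A' ≤ #V := (card_le_card hA').trans (hAB.trans hBV)
  have hA₀ : #A ≠ 0 := (card_pos.2 ⟨α, hα⟩).ne'
  have hBC₀ : #B * #C ≠ 0 :=
    mul_ne_zero ((Nat.pos_of_ne_zero hA₀).trans_le hAB).ne' hC.card_pos.ne'
  have hsum := (sum_quotientCount B C).le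
  have hsq : ∑ x ∈ B / C, (quotientCount B C x : ℝ) ^ 4 ≤
      18 * 10003 ^ 2 / Real.log 2 * m * (#V ^ 2 * #C ^ 3 / #A) * Real.log (2 * #A) := by
    refine (rowSeparated_mul (fun β hβ => hg β (hA' hβ)) hinj).sum_pow_four_le
      (le_max_of_le_left hA'V) (fun β hβ _ _ => quotientCount_le_card_filter hC₀ (hA' hβ))
      (fun x hx => (quotientCount_le_card_left hC₀ (ne_of_mem_of_not_mem hx hX)).trans hBV) hBC₀
      hsum (Nat.mul_le_mul_right _ hBV) hA₀ hcard ?_ (p := p)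
    calc (#A * (#B * #C)) ^ 2 = #A ^ 2 * #B * #C ^ 2 * #B := by ring
      _ ≤ p ^ 3 * #V := Nat.mul_le_mul hp hBV
  have hcube : ∑ x ∈ B / C, (quotientCount B C x : ℝ) ^ 4 ≤
      18 * 10003 ^ 2 / Real.log 2 * m * (#C ^ 2 * #V ^ 3 / #A) * Real.log (2 * #A) := by
    refine (rowSeparated_inv hX (fun β hβ => hg β (hA' hβ)) hinj).sum_pow_four_le
      (le_max_of_le_right hA'V) (fun β hβ x hx => quotientCount_le_card_filter_image₂ hC₀
        (ne_of_mem_of_not_mem hx hX) (hA' hβ) (hg β (hA' hβ)))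
      (fun x _ => quotientCount_le_card_right hC₀) hBC₀
      hsum (Nat.mul_comm _ _ ▸ Nat.mul_le_mul_left _ hBV) hA₀ hcard ?_ (p := p)
    calc (#A * (#B * #C)) ^ 2 = #A ^ 2 * #B ^ 2 * #C * #C := by ring
      _ ≤ p ^ 3 * #C := Nat.mul_le_mul_right _ hp'
  rcases min_choice (#V ^ 3 * #C ^ 2 / #A : ℝ) (#V ^ 2 * #C ^ 3 / #A) with hmin | hmin <;> rw [hmin]
  · rwa [mul_comm ((#V : ℝ) ^ 3)]
  · exact hsq

end Application

section PrimeField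

variable {p : ℕ} [Fact p.Prime]

theorem rDiv_eq_quotientCount (B C : Finset (ZMod p)) (x : ZMod p) :
    rDiv B C x = quotientCount B C x := by
  simp only [rDiv, quotientCount, div_eq_mul_inv]

theorem E4mul_eq_sum_quotientCount {B C : Finset (ZMod p)} (hB : 0 ∉ B) (hC : 0 ∉ C) :
    E4mul B C = ∑ x ∈ B / C, quotientCount B C x ^ 4 := by
  simp only [E4mul, rDiv_eq_quotientCount]
  refine (sum_subset (fun x hx => ?_) fun x _ hx => ?_).symm
  · exact mem_filter.2 ⟨mem_univ x, ne_of_mem_of_not_mem hx (zero_notMem_div hB hC)⟩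
  · rw [quotientCount_eq_zero hx, zero_pow four_ne_zero]

theorem card_filter_eq_le_mu {A : Finset (ZMod p)} {f : ZMod p → ZMod p} (hA : 0 ∉ A)
    (hf : ∀ x ∈ A, f x ≠ 0) (t : ZMod p) : #{x ∈ A | f x = t} ≤ mu f := by
  rcases eq_or_ne t 0 with rfl | ht
  · rw [filter_false_of_mem hf, card_empty]
    exact Nat.zero_le _
  · refine (card_le_card fun x hx => ?_).trans
      (le_sup (f := fun t => #{x | x ≠ 0 ∧ f x = t}) (mem_filter.2 ⟨mem_univ t, ht⟩))
    obtain ⟨hxA, hxt⟩ := mem_filter.1 hx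
    exact mem_filter.2 ⟨mem_univ x, ne_of_mem_of_not_mem hxA hA, hxt⟩

end PrimeField

theorem sq_mul_mul_sq_le_pow_three {a b c p : ℕ} (ha : (a : ℝ) ≤ (p : ℝ) ^ ((3 : ℝ) / 5))
    (hb : (b : ℝ) ≤ (p : ℝ) ^ ((3 : ℝ) / 5)) (hc : (c : ℝ) ≤ (p : ℝ) ^ ((3 : ℝ) / 5)) :
    a ^ 2 * b * c ^ 2 ≤ p ^ 3 := by
  set y := (p : ℝ) ^ ((3 : ℝ) / 5) with hy
  have hy₅ : y ^ 5 = (p : ℝ) ^ 3 := by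
    rw [hy, ← Real.rpow_natCast, ← Real.rpow_mul p.cast_nonneg]
    norm_num
  have hle : (a : ℝ) ^ 2 * b * c ^ 2 ≤ y ^ 5 := by
    calc (a : ℝ) ^ 2 * b * c ^ 2 ≤ y ^ 2 * y * y ^ 2 := by gcongr
      _ = y ^ 5 := by ring
  exact_mod_cast hle.trans_eq hy₅

theorem fourth_multiplicative_energy_bound :
    ∃ C > (0:ℝ),
      ∀ (p : ℕ) [Fact p.Prime], p ≠ 2 →
      ∀ g h : ZMod p → ZMod p,
      (∀ x : ZMod p, x ≠ 0 → g x ≠ 0) → (∀ x : ZMod p, x ≠ 0 → h x ≠ 0) →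
      ∀ A B Cs : Finset (ZMod p),
      A.Nonempty → B.Nonempty → Cs.Nonempty →
      (0:ZMod p) ∉ A → (0:ZMod p) ∉ B → (0:ZMod p) ∉ Cs →
      A.card ≤ B.card →
      (A.card : ℝ) ≤ (p:ℝ) ^ ((3:ℝ)/5) →
      (B.card : ℝ) ≤ (p:ℝ) ^ ((3:ℝ)/5) →
      (Cs.card : ℝ) ≤ (p:ℝ) ^ ((3:ℝ)/5) →
      (E4mul B Cs : ℝ) ≤
        C * ((mu (fun x => g x * h x) : ℕ) : ℝ) ^ 4 *
          min (((Finset.image₂ (fun x y => g x * (h x + y)) A B).card : ℝ) ^ 3 * (Cs.card : ℝ) ^ 2 / (A.card : ℝ))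
              (((Finset.image₂ (fun x y => g x * (h x + y)) A B).card : ℝ) ^ 2 * (Cs.card : ℝ) ^ 3 / (A.card : ℝ)) *
          Real.log (2 * (A.card : ℝ)) := by
  have hK : (0 : ℝ) < 18 * 10003 ^ 2 / Real.log 2 :=
    div_pos (by norm_num) (Real.log_pos one_lt_two)
  refine ⟨_, hK, fun p _ _ g h hg hh A B C hA _ hC hA₀ hB₀ hC₀ hAB hAp hBp hCp => ?_⟩
  have hg' (α) (hα : α ∈ A) : g α ≠ 0 := hg α (ne_of_mem_of_not_mem hα hA₀)
  have hh' (α) (hα : α ∈ A) : h α ≠ 0 := hh α (ne_of_mem_of_not_mem hα hA₀)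
  have hmu := card_filter_eq_le_mu hA₀ fun α hα => mul_ne_zero (hg' α hα) (hh' α hα)
  have hp := sq_mul_mul_sq_le_pow_three hAp hBp hCp
  have hp' : #A ^ 2 * #B ^ 2 * #C ≤ p ^ 3 := by
    rw [mul_right_comm]
    exact sq_mul_mul_sq_le_pow_three hAp hCp hBp
  have hmain := fourth_multiplicative_energy_bound_general hA hC hB₀ hC₀ hg' hmu hAB hp hp'
  rw [E4mul_eq_sum_quotientCount hB₀ hC₀]
  push_cast
  refine hmain.trans ?_
  have hlog : 0 ≤ Real.log (2 * #A) := by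
    rw [← Nat.cast_ofNat, ← Nat.cast_mul]
    exact Real.log_natCast_nonneg _
  gcongr
  exact_mod_cast Nat.le_self_pow four_ne_zero _
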